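/- Let Ω be a bounded open convex set in ℝ² containing the origin in its interior. Assume ∂Ω is C¹ and, in an arclength parametrization, the components of the unit tangent vector are absolutely continuous, so the curvature κ is defined almost everywhere as an L¹ function on ∂Ω. Assume there are a > 0 and ε > 0 with κ(x) ≥ a for almost every x ∈ ∂Ω and ∫_{∂Ω} κ (log(2+κ))^{2+ε} dσ < ∞. Then there is a constant C such that for all r ≥ 2 and h ≥ 1: S^±(r,h) ≤ C r [ h^{−1} + (log(2+r))^{−1−ε/2} ]. -/

import Mathlib

/-!
Let `X ξ` be the boundary point of `Ω` with outer unit normal `ξ`, so that `ρ*(u ξ) = u ⟪X ξ, ξ⟫`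
for `u ≥ 0`. The two hypotheses on the curvature `κ` control `X` from both sides.

* Since `κ ≥ a`, the normal turns at least proportionally to arclength, so `X` is Lipschitz.
* Along an arc the normal turns by the integral of `κ`. If `κ ∈ L log^p L`, then splitting `κ` at a
  threshold `T` gives `‖ξ - η‖ ≤ C T ‖X ξ - X η‖ + I / log(2 + T)^p`.

Put `r = ℓ³` and `H = log(2 + r)^{p/2}`. Lowering `h` enlarges the annulus, so one may assume
`h ≤ H` and look for a bound `O(r / h)`. A maximal `ℓ⁻²`-separated set of directions cuts the
annulus into `O(ℓ²)` pieces. As `X` is Lipschitz, the level curve `ρ* = r` leaves its tangent line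
by only `O(r ℓ⁻⁴) = O(1 / ℓ)` along a piece, so each piece lies in a strip of length `O(ℓ)` and
width `O(1 / h)`. Triangles in it spanned by lattice points have area `O(ℓ / h)`; hence a piece
contains `O(ℓ / h)` lattice points, unless they are collinear with a direction `v ∈ ℤ²`,
`0 < |v| ≤ h`, and then there are `O(ℓ / |v|)` of them and `⟪X ξ, v⟫ = O(1 / ℓ)`.

The pieces of the first kind contain `O(ℓ² · ℓ / h) = O(r / h)` points. For the others fix `v`. As
`X ξ` is a Lipschitz function of its direction, the points `X ξ` of these pieces are within
`O(1 / ℓ)` of one of two points. With `T = √ℓ` in the modulus of continuity, their normals `ξ` lie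
in two arcs of length `O(H⁻²)`, which meet `O(ℓ² / H²)` pieces. There are `8 m` vectors `v` of sup
norm `m`, and summing over `m ≤ h` gives `O(∑ m · (ℓ² / H²) · ℓ / m) = O(r h / H²) = O(r / h)`
points.
-/

open MeasureTheory Set
open scoped Pointwise RealInnerProductSpace NNReal ENNReal

noncomputable section

abbrev E2 := EuclideanSpace ℝ (Fin 2)

/-- The embedding of an integer vector into the Euclidean plane. -/
def ek (k : Fin 2 → ℤ) : E2 := (WithLp.equiv 2 (Fin 2 → ℝ)).symm fun i => (k i : ℝ)

/-- Number of lattice points in a set. -/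
def latticeCount (S : Set E2) : ℕ := Nat.card {k : Fin 2 → ℤ | ek k ∈ S}

/-- The lattice rest `E_Ω(t) = card(tΩ ∩ ℤ²) − t²·area(Ω)`. -/
def latticeRest (Ω : Set E2) (t : ℝ) : ℝ :=
  (latticeCount (t • Ω) : ℝ) - t ^ 2 * (volume Ω).toReal

/-- The mean square discrepancy `𝒢_Ω(R,h) = ((1/h)∫_R^{R+h} |E_Ω(t)|² dt)^{1/2}`. -/
def meanSquare (Ω : Set E2) (R h : ℝ) : ℝ :=
  Real.sqrt ((1 / h) * ∫ t in R..(R + h), (latticeRest Ω t) ^ 2)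

/-- The support function `ρ*(ξ) = sup {⟨x,ξ⟩ : x ∈ Ω}`. -/
def suppFn (Ω : Set E2) (ξ : E2) : ℝ := sSup ((fun x => ⟪x, ξ⟫) '' Ω)

/-- `μ(θ,δ)`, the diameter of the cap `𝒞(θ,δ) = {x ∈ ∂Ω : ⟨x,θ⟩ ≥ ρ*(θ) − δ}`. -/
def capDiam (Ω : Set E2) (θ : E2) (δ : ℝ) : ℝ :=
  Metric.diam {x ∈ frontier Ω | suppFn Ω θ - δ ≤ ⟪x, θ⟫}

/-- Curvature bounded below in the generalized sense:
`sup_{θ∈S¹} sup_{δ>0} δ^{-1/2} μ(θ,δ) < ∞`. -/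
def CurvBddBelow (Ω : Set E2) : Prop :=
  ∃ K : ℝ, ∀ θ : E2, ‖θ‖ = 1 → ∀ δ : ℝ, 0 < δ → capDiam Ω θ δ ≤ K * Real.sqrt δ

/-- `γ` is an arclength (unit-speed) parametrization of the `C¹` boundary `∂Ω`, with
period `L`, whose unit tangent vector `γ'` is absolutely continuous with almost-everywhere
derivative `γ''`; the curvature is then `κ = ‖γ''‖`, defined a.e. as an `L¹` function. -/
def BoundaryParam (Ω : Set E2) (γ γ' γ'' : ℝ → E2) (L : ℝ) : Prop :=
  0 < L ∧ (∀ t, HasDerivAt γ (γ' t) t) ∧ Continuous γ' ∧ (∀ t, ‖γ' t‖ = 1) ∧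
    Function.Periodic γ L ∧ γ '' Set.Ico 0 L = frontier Ω ∧ Set.InjOn γ (Set.Ico 0 L) ∧
    (∀ t : ℝ, IntervalIntegrable γ'' volume 0 t) ∧
    (∀ t : ℝ, γ' t = γ' 0 + ∫ s in (0:ℝ)..t, γ'' s)

/-- `S^±(r,h)`, the number of lattice points in the annulus `{ξ : |ρ*(±ξ) − r| ≤ 1/h}`
(the sign `±` is encoded by `s = ±1`). -/
def annCount (Ω : Set E2) (s r h : ℝ) : ℕ :=
  Nat.card {k : Fin 2 → ℤ | |suppFn Ω (s • ek k) - r| ≤ 1 / h}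

/-! ### Separated sets and lattice points spanning small triangles -/

lemma card_le_of_separated {α : Type*} (S : Finset α) (f : α → ℝ) {δ x : ℝ} (hδ : 0 < δ)
    (hx : 0 ≤ x) (hsep : (S : Set α).Pairwise fun a b => δ ≤ |f a - f b|)
    (hdiam : ∀ a ∈ S, ∀ b ∈ S, f a - f b ≤ x) : (S.card : ℝ) ≤ x / δ + 1 := by
  rcases S.eq_empty_or_nonempty with rfl | hne
  · simp only [Finset.card_empty, Nat.cast_zero]; positivity
  obtain ⟨b, hb, hmin⟩ := S.exists_min_image f hne
  have hnonneg : ∀ a ∈ S, 0 ≤ (f a - f b) / δ := fun a ha =>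
    div_nonneg (sub_nonneg.mpr (hmin a ha)) hδ.le
  have hinj : Set.InjOn (fun a => ⌊(f a - f b) / δ⌋₊) S := by
    intro a ha a' ha' heq
    by_contra hne
    have hlt := Int.abs_sub_lt_one_of_floor_eq_floor
      (show ⌊(f a - f b) / δ⌋ = ⌊(f a' - f b) / δ⌋ by
        rw [← Int.natCast_floor_eq_floor (hnonneg a ha),
          ← Int.natCast_floor_eq_floor (hnonneg a' ha')]
        exact congrArg _ heq)
    rw [← sub_div, sub_sub_sub_cancel_right, abs_div, abs_of_pos hδ, div_lt_one hδ] at hlt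
    exact (hsep ha ha' hne).not_gt hlt
  have hmaps : Set.MapsTo (fun a => ⌊(f a - f b) / δ⌋₊) S (Finset.range (⌊x / δ⌋₊ + 1)) := by
    intro a ha
    have : (f a - f b) / δ ≤ x / δ := by gcongr; exact hdiam a ha b hb
    simpa [Nat.lt_succ_iff] using Nat.floor_le_floor this
  have hcard := Finset.card_le_card_of_injOn _ hmaps hinj
  rw [Finset.card_range] at hcard
  calc (S.card : ℝ) ≤ ⌊x / δ⌋₊ + 1 := by exact_mod_cast hcard
    _ ≤ x / δ + 1 := by gcongr; exact Nat.floor_le (by positivity)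

lemma pairwise_one_le_abs_sub_of_injOn {α : Type*} {S : Set α} {f : α → ℤ} (hf : S.InjOn f) :
    S.Pairwise fun a b => 1 ≤ |(f a : ℝ) - f b| := fun a ha b hb hab => by
  exact_mod_cast Int.one_le_abs (sub_ne_zero.mpr fun h => hab (hf ha hb h))

/-- The determinant of a pair of integer vectors, twice the signed area of the lattice triangle
they span. -/
def intDet (u w : ℤ × ℤ) : ℤ := u.1 * w.2 - u.2 * w.1

lemma card_le_of_collinear_of_gcd_le {A : Finset (ℤ × ℤ)} {v : ℤ × ℤ} (hv : IsCoprime v.1 v.2)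
    {g : ℕ} (hcol : ∀ x ∈ A, ∀ y ∈ A, intDet v (y - x) = 0)
    (hgcd : ∀ x ∈ A, ∀ y ∈ A, Int.gcd (y - x).1 (y - x).2 ≤ g) : (A.card : ℝ) ≤ g + 1 := by
  obtain ⟨α, β, hαβ⟩ := hv
  let φ : ℤ × ℤ → ℤ := fun w => α * w.1 + β * w.2
  have φ_sub : ∀ x y, φ (y - x) = φ y - φ x := fun x y => by
    simp only [φ, Prod.fst_sub, Prod.snd_sub]; ring
  have eq_mul : ∀ w, intDet v w = 0 → w.1 = φ w * v.1 ∧ w.2 = φ w * v.2 := by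
    intro w hw
    simp only [intDet] at hw
    exact ⟨by linear_combination (-w.1) * hαβ - β * hw, by linear_combination (-w.2) * hαβ + α * hw⟩
  have hbound : ∀ x ∈ A, ∀ y ∈ A, |φ (y - x)| ≤ g := by
    intro x hx y hy
    obtain ⟨h₁, h₂⟩ := eq_mul _ (hcol x hx y hy)
    have h := hgcd x hx y hy
    rw [h₁, h₂, Int.gcd_mul_left, Int.isCoprime_iff_gcd_eq_one.mp ⟨α, β, hαβ⟩, mul_one] at h
    rw [Int.abs_eq_natAbs]
    exact_mod_cast h
  have hinj : Set.InjOn φ A := by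
    intro x hx y hy hxy
    obtain ⟨h₁, h₂⟩ := eq_mul _ (hcol x hx y hy)
    rw [φ_sub, ← hxy, sub_self, zero_mul] at h₁ h₂
    exact (sub_eq_zero.mp (Prod.ext h₁ h₂)).symm
  have := card_le_of_separated A (fun w => (φ w : ℝ)) one_pos (Nat.cast_nonneg g)
    (pairwise_one_le_abs_sub_of_injOn hinj) fun y hy x hx => by
      have := (le_abs_self _).trans (hbound x hx y hy)
      rw [φ_sub] at this
      exact_mod_cast this
  simpa using this

lemma card_le_of_card_fiber_le {α : Type*} (A : Finset α) (f : α → ℤ) {x N : ℝ} (hx : 0 ≤ x)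
    (hf : ∀ k ∈ A, |(f k : ℝ)| ≤ x) (hN : ∀ c, ((A.filter fun k => f k = c).card : ℝ) ≤ N) :
    (A.card : ℝ) ≤ (2 * x + 1) * N := by
  have himage : ((A.image f).card : ℝ) ≤ 2 * x + 1 := by
    have := card_le_of_separated (A.image f) (fun c => (c : ℝ)) (x := 2 * x) one_pos
      (by positivity) (pairwise_one_le_abs_sub_of_injOn Function.injective_id.injOn)
      fun c hc d hd => by
        obtain ⟨k, hk, rfl⟩ := Finset.mem_image.mp hc
        obtain ⟨l, hl, rfl⟩ := Finset.mem_image.mp hd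
        linarith [le_abs_self (f k : ℝ), neg_abs_le (f l : ℝ), hf k hk, hf l hl]
    simpa using this
  have hN0 : 0 ≤ N := (Nat.cast_nonneg _).trans (hN 0)
  calc (A.card : ℝ) = ∑ c ∈ A.image f, ((A.filter fun k => f k = c).card : ℝ) := by
        exact_mod_cast Finset.card_eq_sum_card_image f A
    _ ≤ (A.image f).card * N := by
        rw [← nsmul_eq_mul]; exact Finset.sum_le_card_nsmul _ _ _ fun c _ => hN c
    _ ≤ (2 * x + 1) * N := by gcongr

lemma exists_sub_eq_smul_of_forall_gcd_le {A : Finset (ℤ × ℤ)} (hA : 1 < A.card) :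
    ∃ g : ℕ, 1 ≤ g ∧ (∀ x ∈ A, ∀ y ∈ A, Int.gcd (y - x).1 (y - x).2 ≤ g) ∧
      ∃ p ∈ A, ∃ q ∈ A, ∃ v : ℤ × ℤ, IsCoprime v.1 v.2 ∧ q - p = g • v := by
  obtain ⟨a, ha, b, hb, hab⟩ := Finset.one_lt_card.mp hA
  obtain ⟨⟨p, q⟩, hpq, hmax⟩ := Finset.exists_max_image (A ×ˢ A)
    (fun x => Int.gcd (x.2 - x.1).1 (x.2 - x.1).2) ⟨(a, b), Finset.mk_mem_product ha hb⟩
  obtain ⟨hp, hq⟩ := Finset.mem_product.mp hpq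
  have hpos : 0 < Int.gcd (q - p).1 (q - p).2 := by
    refine lt_of_lt_of_le (Nat.pos_of_ne_zero fun h => ?_)
      (hmax (a, b) (Finset.mk_mem_product ha hb))
    rw [Int.gcd_eq_zero_iff] at h
    exact hab (sub_eq_zero.mp (Prod.ext h.1 h.2)).symm
  obtain ⟨v₁, v₂, hv, h₁, h₂⟩ := Int.exists_gcd_one hpos
  refine ⟨_, hpos, fun x hx y hy => hmax (x, y) (Finset.mk_mem_product hx hy), p, hp, q, hq,
    (v₁, v₂), Int.isCoprime_iff_gcd_eq_one.mpr hv, Prod.ext ?_ ?_⟩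
  · rwa [Prod.smul_fst, nsmul_eq_mul, mul_comm]
  · rwa [Prod.smul_snd, nsmul_eq_mul, mul_comm]

/-- The alternative is decided by the largest gcd `g` of a difference of two points of `A`, attained
as `q - p = g • v` with `v` primitive: the lines parallel to `v` carry at most `g + 1` points of `A`
each, and by the area hypothesis at most `2 * T / g + 1` of them meet `A`. -/
lemma card_le_or_exists_sub_eq_smul (A : Finset (ℤ × ℤ)) {T : ℝ} (hT : 0 ≤ T)
    (hA : ∀ p ∈ A, ∀ q ∈ A, ∀ k ∈ A, |(intDet (q - p) (k - p) : ℝ)| ≤ T) :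
    (A.card : ℝ) ≤ 5 * T + 1 ∨
      ∃ v : ℤ × ℤ, v ≠ 0 ∧ ∃ p ∈ A, ∃ q ∈ A, ∃ i : ℕ, (A.card : ℝ) - 1 ≤ i ∧ q - p = i • v := by
  rcases Nat.lt_or_ge 1 A.card with hone | hsmall
  swap
  · left
    have : (A.card : ℝ) ≤ 1 := by exact_mod_cast hsmall
    linarith
  obtain ⟨g, hg1, hgcd, p, hp, q, hq, v, hv, hgv⟩ := exists_sub_eq_smul_of_forall_gcd_le hone
  have hv0 : v ≠ 0 := by rintro rfl; exact not_isCoprime_zero_zero hv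
  have hg : (1 : ℝ) ≤ g := by exact_mod_cast hg1
  let f : ℤ × ℤ → ℤ := fun k => intDet v (k - p)
  have f_sub : ∀ x y, intDet v (y - x) = f y - f x := fun x y => by
    simp only [f, intDet, Prod.fst_sub, Prod.snd_sub]; ring
  have harea : ∀ k ∈ A, |(f k : ℝ)| ≤ T / g := by
    intro k hk
    have h := hA p hp q hq k hk
    have hdet : intDet (q - p) (k - p) = g * f k := by
      simp only [hgv, f, intDet, Prod.smul_fst, Prod.smul_snd]
      ring
    rw [hdet, Int.cast_mul, Int.cast_natCast, abs_mul, Nat.abs_cast] at h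
    rwa [le_div_iff₀' (by linarith)]
  have hline : ∀ c, ((A.filter fun k => f k = c).card : ℝ) ≤ g + 1 := fun c =>
    card_le_of_collinear_of_gcd_le hv
      (fun x hx y hy => by
        rw [f_sub, (Finset.mem_filter.mp hx).2, (Finset.mem_filter.mp hy).2, sub_self])
      fun x hx y hy => hgcd x (Finset.filter_subset _ _ hx) y (Finset.filter_subset _ _ hy)
  rcases lt_or_ge T g with hTg | hgT
  · right
    have hf0 : ∀ k ∈ A, f k = 0 := fun k hk => by
      have : |(f k : ℝ)| < 1 := (harea k hk).trans_lt ((div_lt_one (by linarith)).mpr hTg)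
      exact Int.abs_lt_one_iff.mp (by exact_mod_cast this)
    have hAline := hline 0
    rw [Finset.filter_true_of_mem hf0] at hAline
    exact ⟨v, hv0, p, hp, q, hq, g, by linarith, hgv⟩
  · left
    calc (A.card : ℝ) ≤ (2 * (T / g) + 1) * (g + 1) :=
          card_le_of_card_fiber_le A f (by positivity) harea hline
      _ = 2 * T + 2 * (T / g) + g + 1 := by field_simp; ring
      _ ≤ 5 * T + 1 := by linarith [div_le_self hT hg]

lemma exists_separated_net {α E : Type*} [SeminormedAddCommGroup E] (P : Finset α) (f : α → E)
    {δ : ℝ} (hδ : 0 ≤ δ) :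
    ∃ Q ⊆ P, ((Q : Set α).Pairwise fun a b => δ ≤ ‖f a - f b‖) ∧
      ∀ p ∈ P, ∃ q ∈ Q, ‖f p - f q‖ ≤ δ := by
  classical
  obtain ⟨Q, hQ⟩ := Finset.exists_maximal
    (s := P.powerset.filter fun Q : Finset α => (Q : Set α).Pairwise fun a b => δ ≤ ‖f a - f b‖)
    ⟨∅, by simp⟩
  obtain ⟨hQP, hsep⟩ := Finset.mem_filter.mp hQ.prop
  refine ⟨Q, Finset.mem_powerset.mp hQP, hsep, fun p hp => ?_⟩
  by_contra! hfar
  have hpQ : p ∉ Q := fun h => (hfar p h).not_ge (by simpa using hδ)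
  refine hpQ (hQ.le_of_ge (Finset.mem_filter.mpr ⟨?_, ?_⟩) (Finset.subset_insert p Q)
    (Finset.mem_insert_self p Q))
  · exact Finset.mem_powerset.mpr (Finset.insert_subset hp (Finset.mem_powerset.mp hQP))
  · rw [Finset.coe_insert]
    refine hsep.insert fun q hq _ => ⟨(hfar q hq).le, ?_⟩
    rw [norm_sub_rev]
    exact (hfar q hq).le

/-! ### Oriented planes -/

section Plane

variable {V : Type*} [NormedAddCommGroup V] [InnerProductSpace ℝ V]

lemma norm_sub_sq_of_norm_eq_one {x y : V} (hx : ‖x‖ = 1) (hy : ‖y‖ = 1) :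
    ‖x - y‖ ^ 2 = 2 - 2 * ⟪x, y⟫ := by
  rw [norm_sub_sq_real, hx, hy]; ring

variable [Fact (Module.finrank ℝ V = 2)] (o : Orientation ℝ V (Fin 2))

lemma norm_mul_abs_areaForm_le_of_strip {x u w : V} {W D : ℝ} (hu : ‖u‖ ≤ D) (hw : ‖w‖ ≤ D)
    (hxu : |⟪x, u⟫| ≤ W) (hxw : |⟪x, w⟫| ≤ W) : ‖x‖ * |o.areaForm u w| ≤ 2 * W * D := by
  rcases (norm_nonneg x).eq_or_lt with hx | hx
  · rw [← hx, zero_mul]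
    have := (norm_nonneg u).trans hu
    have := (abs_nonneg _).trans hxu
    positivity
  have harea : ∀ y, ‖y‖ ≤ D → |o.areaForm x y| ≤ ‖x‖ * D := fun y hy =>
    (o.abs_areaForm_le x y).trans (by gcongr)
  refine le_of_mul_le_mul_left ?_ hx
  calc ‖x‖ * (‖x‖ * |o.areaForm u w|)
      = |⟪x, u⟫ * o.areaForm x w - o.areaForm x u * ⟪x, w⟫| := by
        rw [o.inner_mul_areaForm_sub, abs_mul, abs_of_nonneg (sq_nonneg ‖x‖)]; ring
    _ ≤ |⟪x, u⟫| * |o.areaForm x w| + |o.areaForm x u| * |⟪x, w⟫| := by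
        rw [← abs_mul, ← abs_mul]; exact abs_sub _ _
    _ ≤ W * (‖x‖ * D) + ‖x‖ * D * W := by
        have := (norm_nonneg u).trans hu
        have := (abs_nonneg _).trans hxu
        gcongr
        · exact harea w hw
        · exact harea u hu
    _ = ‖x‖ * (2 * W * D) := by ring

/-- A convex curve is a Lipschitz graph in polar coordinates. This is one half of the estimate: the
supporting line at `Y`, with normal `ζ`, bounds how far `Y'` can lie beyond `Y` on nearby rays. -/
lemma areaForm_sub_areaForm_le_of_inner_le {v Y Y' ζ : V} {c M δ : ℝ} (hc : 0 < c)
    (hv : ‖v‖ = 1) (hζ : ‖ζ‖ = 1) (hY : c ≤ ⟪Y, ζ⟫) (hYM : ‖Y‖ ≤ M) (hYM' : ‖Y'‖ ≤ M)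
    (hYY : ⟪Y', ζ⟫ ≤ ⟪Y, ζ⟫) (hδ : |⟪v, Y⟫| ≤ δ) (hδ' : |⟪v, Y'⟫| ≤ δ)
    (hside : 0 ≤ o.areaForm v Y) :
    o.areaForm v Y' - o.areaForm v Y ≤ 2 * M * δ / c := by
  have hM : 0 ≤ M := (norm_nonneg _).trans hYM
  have hδ0 : 0 ≤ δ := (abs_nonneg _).trans hδ
  have hid : o.areaForm v Y' * ⟪Y, ζ⟫ - o.areaForm v Y * ⟪Y', ζ⟫
      = (o.areaForm v Y' * ⟪v, Y⟫ - o.areaForm v Y * ⟪v, Y'⟫) * ⟪v, ζ⟫ := by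
    have h := o.inner_mul_inner_add_areaForm_mul_areaForm v Y ζ
    have h' := o.inner_mul_inner_add_areaForm_mul_areaForm v Y' ζ
    rw [hv, one_pow, one_mul] at h h'
    linear_combination o.areaForm v Y * h' - o.areaForm v Y' * h
  have harea : ∀ y, ‖y‖ ≤ M → |o.areaForm v y| ≤ M := fun y hy =>
    (o.abs_areaForm_le v y).trans (by rwa [hv, one_mul])
  have hvζ : |⟪v, ζ⟫| ≤ 1 := by simpa [hv, hζ] using abs_real_inner_le_norm v ζ
  have hcross : |o.areaForm v Y' * ⟪v, Y⟫ - o.areaForm v Y * ⟪v, Y'⟫| ≤ M * δ + M * δ := by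
    refine (abs_sub _ _).trans ?_
    rw [abs_mul, abs_mul]
    gcongr
    · exact harea Y' hYM'
    · exact harea Y hYM
  have hle : (o.areaForm v Y' - o.areaForm v Y) * ⟪Y, ζ⟫ ≤ 2 * M * δ :=
    calc (o.areaForm v Y' - o.areaForm v Y) * ⟪Y, ζ⟫
        ≤ o.areaForm v Y' * ⟪Y, ζ⟫ - o.areaForm v Y * ⟪Y', ζ⟫ := by
          rw [sub_mul]; gcongr
      _ ≤ (M * δ + M * δ) * 1 := by
          rw [hid]
          refine (le_abs_self _).trans ?_
          rw [abs_mul]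
          gcongr
      _ = 2 * M * δ := by ring
  rcases le_total (o.areaForm v Y' - o.areaForm v Y) 0 with hneg | hpos
  · exact hneg.trans (by positivity)
  · rw [le_div_iff₀ hc]
    exact (mul_le_mul_of_nonneg_left hY hpos).trans hle

lemma norm_sub_le_of_near_ray {v X X' ξ ξ' : V} {c M δ : ℝ} (hc : 0 < c) (hv : ‖v‖ = 1)
    (hξ : ‖ξ‖ = 1) (hξ' : ‖ξ'‖ = 1) (hX : c ≤ ⟪X, ξ⟫) (hX' : c ≤ ⟪X', ξ'⟫) (hM : ‖X‖ ≤ M)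
    (hM' : ‖X'‖ ≤ M) (hs : ⟪X', ξ⟫ ≤ ⟪X, ξ⟫) (hs' : ⟪X, ξ'⟫ ≤ ⟪X', ξ'⟫) (hδ : |⟪v, X⟫| ≤ δ)
    (hδ' : |⟪v, X'⟫| ≤ δ) (hside : 0 ≤ o.areaForm v X) (hside' : 0 ≤ o.areaForm v X') :
    ‖X - X'‖ ≤ (2 + 2 * M / c) * δ := by
  have hδ0 : 0 ≤ δ := (abs_nonneg _).trans hδ
  have hM0 : 0 ≤ M := (norm_nonneg _).trans hM
  have harea : |o.areaForm v (X - X')| ≤ 2 * M * δ / c := by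
    rw [map_sub, abs_sub_le_iff]
    exact ⟨areaForm_sub_areaForm_le_of_inner_le o hc hv hξ' hX' hM' hM hs' hδ' hδ hside',
      areaForm_sub_areaForm_le_of_inner_le o hc hv hξ hX hM hM' hs hδ hδ' hside⟩
  have hinner : |⟪v, X - X'⟫| ≤ 2 * δ := by
    rw [inner_sub_right]
    exact (abs_sub _ _).trans (by linarith)
  have hsq := o.inner_sq_add_areaForm_sq v (X - X')
  rw [hv, one_pow, one_mul, ← sq_abs, ← sq_abs (o.areaForm v _)] at hsq
  refine le_of_sq_le_sq ?_ (by positivity)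
  calc ‖X - X'‖ ^ 2 = |⟪v, X - X'⟫| ^ 2 + |o.areaForm v (X - X')| ^ 2 := hsq.symm
    _ ≤ (2 * δ) ^ 2 + (2 * M * δ / c) ^ 2 := by gcongr
    _ ≤ (2 * δ + 2 * M * δ / c) ^ 2 := by
        have : 0 ≤ 2 * (2 * δ) * (2 * M * δ / c) := by positivity
        linarith
    _ = ((2 + 2 * M / c) * δ) ^ 2 := by ring

/-! ### Separated sets of directions -/

lemma inner_eq_cos_toReal_sub {e x y : V} (he : ‖e‖ = 1) (hx : ‖x‖ = 1) (hy : ‖y‖ = 1) :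
    ⟪x, y⟫ = Real.cos ((o.oangle e y).toReal - (o.oangle e x).toReal) := by
  have ne_zero : ∀ {z : V}, ‖z‖ = 1 → z ≠ 0 := fun hz => norm_ne_zero_iff.mp (by simp [hz])
  rw [o.inner_eq_norm_mul_norm_mul_cos_oangle, hx, hy, one_mul, one_mul,
    ← o.oangle_sub_left (ne_zero he) (ne_zero hx) (ne_zero hy), ← Real.Angle.cos_coe,
    Real.Angle.coe_sub, Real.Angle.coe_toReal, Real.Angle.coe_toReal]

lemma norm_sub_le_abs_toReal_sub {e x y : V} (he : ‖e‖ = 1) (hx : ‖x‖ = 1) (hy : ‖y‖ = 1) :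
    ‖x - y‖ ≤ |(o.oangle e x).toReal - (o.oangle e y).toReal| := by
  refine abs_le_of_sq_le_sq' ?_ (abs_nonneg _) |>.2
  rw [norm_sub_sq_of_norm_eq_one hx hy, inner_eq_cos_toReal_sub o he hx hy, sq_abs]
  have := Real.one_sub_sq_div_two_le_cos
    (x := (o.oangle e y).toReal - (o.oangle e x).toReal)
  linarith [sub_sq_comm (o.oangle e y).toReal (o.oangle e x).toReal]

lemma abs_toReal_oangle_le {e x : V} (he : ‖e‖ = 1) (hx : ‖x‖ = 1) :
    |(o.oangle e x).toReal| ≤ Real.pi / 2 * ‖x - e‖ := by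
  have hcos := Real.cos_le_one_sub_mul_cos_sq (Real.Angle.abs_toReal_le_pi (o.oangle e x))
  have hnorm := norm_sub_sq_of_norm_eq_one hx he
  rw [real_inner_comm, inner_eq_cos_toReal_sub o he he hx, o.oangle_self, Real.Angle.toReal_zero,
    sub_zero] at hnorm
  refine abs_le_of_sq_le_sq ?_ (by positivity)
  calc (o.oangle e x).toReal ^ 2
      = Real.pi ^ 2 / 4 * (2 * (2 / Real.pi ^ 2 * (o.oangle e x).toReal ^ 2)) := by field_simp; ring
    _ ≤ Real.pi ^ 2 / 4 * ‖x - e‖ ^ 2 := by gcongr; linarith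
    _ = (Real.pi / 2 * ‖x - e‖) ^ 2 := by ring

lemma card_le_of_separated_directions {α : Type*} (S : Finset α) (f : α → V) {δ m : ℝ}
    (hδ : 0 < δ) (hm : 0 ≤ m) (hunit : ∀ a ∈ S, ‖f a‖ = 1)
    (hsep : (S : Set α).Pairwise fun a b => δ ≤ ‖f a - f b‖)
    (hdiam : ∀ a ∈ S, ∀ b ∈ S, ‖f a - f b‖ ≤ m) : (S.card : ℝ) ≤ Real.pi * m / δ + 1 := by
  rcases S.eq_empty_or_nonempty with rfl | ⟨e, he⟩
  · simp only [Finset.card_empty, Nat.cast_zero]; positivity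
  have : FiniteDimensional ℝ V := .of_fact_finrank_eq_two
  let o : Orientation ℝ V (Fin 2) :=
    ((stdOrthonormalBasis ℝ V).reindex (finCongr Fact.out)).toBasis.orientation
  have hangle : ∀ a ∈ S, |(o.oangle (f e) (f a)).toReal| ≤ Real.pi / 2 * m := fun a ha =>
    (abs_toReal_oangle_le o (hunit e he) (hunit a ha)).trans (by gcongr; exact hdiam a ha e he)
  refine card_le_of_separated S (fun a => (o.oangle (f e) (f a)).toReal) hδ (by positivity)
    (fun a ha b hb hab => (hsep ha hb hab).trans
      (norm_sub_le_abs_toReal_sub o (hunit e he) (hunit a ha) (hunit b hb)))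
    fun a ha b hb => ?_
  linarith [(abs_le.mp (hangle a ha)).2, (abs_le.mp (hangle b hb)).1]

lemma exists_separated_directions {α : Type*} (P : Finset α) (f : α → V) {δ : ℝ} (hδ : 0 < δ)
    (hunit : ∀ a ∈ P, ‖f a‖ = 1) :
    ∃ Q ⊆ P, ((Q : Set α).Pairwise fun a b => δ ≤ ‖f a - f b‖) ∧
      (Q.card : ℝ) ≤ Real.pi * 2 / δ + 1 ∧
      (P.card : ℝ) ≤ ∑ q ∈ Q, ((P.filter fun p => ‖f q - f p‖ ≤ δ).card : ℝ) := by
  classical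
  obtain ⟨Q, hQP, hsep, hnet⟩ := exists_separated_net P f hδ.le
  refine ⟨Q, hQP, hsep, ?_, ?_⟩
  · refine card_le_of_separated_directions Q f hδ zero_le_two (fun a ha => hunit a (hQP ha)) hsep
      fun a ha b hb => (norm_sub_le _ _).trans_eq ?_
    rw [hunit a (hQP ha), hunit b (hQP hb), one_add_one_eq_two]
  · have hcover : P ⊆ Q.biUnion fun q => P.filter fun p => ‖f q - f p‖ ≤ δ := fun p hp => by
      obtain ⟨q, hq, hpq⟩ := hnet p hp
      exact Finset.mem_biUnion.mpr
        ⟨q, hq, Finset.mem_filter.mpr ⟨hp, (norm_sub_rev _ _).trans_le hpq⟩⟩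
    exact_mod_cast (Finset.card_le_card hcover).trans Finset.card_biUnion_le

end Plane

/-! ### Lattice points in strips -/

/-- The integer lattice of the Euclidean plane, indexed by pairs so that `Finset.box` enumerates the
lattice vectors of a given sup norm. -/
def zvec : ℤ × ℤ →+ E2 where
  toFun k := !₂[(k.1 : ℝ), (k.2 : ℝ)]
  map_zero' := by ext i; fin_cases i <;> simp
  map_add' _ _ := by ext i; fin_cases i <;> simp

lemma le_norm_zvec_of_mem_box {v : ℤ × ℤ} {m : ℕ} (hv : v ∈ Finset.box m) :
    (m : ℝ) ≤ ‖zvec v‖ := by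
  have h₀ : |(v.1 : ℝ)| ≤ ‖zvec v‖ := PiLp.norm_apply_le (zvec v) 0
  have h₁ : |(v.2 : ℝ)| ≤ ‖zvec v‖ := PiLp.norm_apply_le (zvec v) 1
  rw [Int.mem_box] at hv
  rw [← hv, Nat.cast_max, Nat.cast_natAbs, Nat.cast_natAbs, Int.cast_abs, Int.cast_abs]
  exact max_le h₀ h₁

instance : Fact (Module.finrank ℝ E2 = 2) := ⟨finrank_euclideanSpace_fin⟩

/-- The orientation of the Euclidean plane for which the standard basis is positive. -/
def stdOrientation : Orientation ℝ E2 (Fin 2) :=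
  (EuclideanSpace.basisFun (Fin 2) ℝ).toBasis.orientation

lemma areaForm_zvec (u w : ℤ × ℤ) :
    stdOrientation.areaForm (zvec u) (zvec w) = intDet u w := by
  rw [Orientation.areaForm_to_volumeForm,
    stdOrientation.volumeForm_robust (EuclideanSpace.basisFun (Fin 2) ℝ) rfl,
    Module.Basis.det_apply, Matrix.det_fin_two]
  simp [Module.Basis.toMatrix_apply, zvec, intDet, mul_comm]

/-- The triangles spanned by lattice points of a strip have small area. -/
lemma card_le_or_exists_of_strip (A : Finset (ℤ × ℤ)) {x : E2} {c W D : ℝ} (hc : 0 < c)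
    (hx : c ≤ ‖x‖) (hW : 0 ≤ W) (hD : 0 ≤ D) (hdiam : ∀ p ∈ A, ∀ q ∈ A, ‖zvec p - zvec q‖ ≤ D)
    (hstrip : ∀ p ∈ A, ∀ q ∈ A, |⟪x, zvec p - zvec q⟫| ≤ W) :
    (A.card : ℝ) ≤ 10 * W * D / c + 1 ∨
      ∃ v : ℤ × ℤ, v ≠ 0 ∧ ((A.card : ℝ) - 1) * ‖zvec v‖ ≤ D ∧
        ((A.card : ℝ) - 1) * |⟪x, zvec v⟫| ≤ W := by
  have harea : ∀ p ∈ A, ∀ q ∈ A, ∀ k ∈ A, |(intDet (q - p) (k - p) : ℝ)| ≤ 2 * W * D / c := by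
    intro p hp q hq k hk
    rw [← areaForm_zvec, map_sub zvec, map_sub zvec, le_div_iff₀' hc]
    exact (mul_le_mul_of_nonneg_right hx (abs_nonneg _)).trans
      (norm_mul_abs_areaForm_le_of_strip stdOrientation (hdiam q hq p hp) (hdiam k hk p hp)
        (hstrip q hq p hp) (hstrip k hk p hp))
  rcases card_le_or_exists_sub_eq_smul A (by positivity) harea with
    hcard | ⟨v, hv, p, hp, q, hq, i, hi, hqp⟩
  · left
    convert hcard using 1
    ring
  · right
    have hsub : zvec q - zvec p = (i : ℝ) • zvec v := by
      rw [← map_sub, hqp, map_nsmul, Nat.cast_smul_eq_nsmul]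
    refine ⟨v, hv, ?_, ?_⟩
    · have := hdiam q hq p hp
      rw [hsub, norm_smul, Real.norm_natCast] at this
      exact (mul_le_mul_of_nonneg_right hi (norm_nonneg _)).trans this
    · have := hstrip q hq p hp
      rw [hsub, inner_smul_right, abs_mul, Nat.abs_cast] at this
      exact (mul_le_mul_of_nonneg_right hi (abs_nonneg _)).trans this

lemma card_le_or_exists_mem_box (A : Finset (ℤ × ℤ)) {x : E2} {c W D C₀ ℓ h : ℝ} (hc : 0 < c)
    (hx : c ≤ ‖x‖) (hW : 0 ≤ W) (hD : 0 ≤ D) (hℓ : 0 < ℓ) (hh : 1 ≤ h) (hhℓ : h ≤ C₀ * ℓ)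
    (hdiam : ∀ p ∈ A, ∀ q ∈ A, ‖zvec p - zvec q‖ ≤ D * ℓ)
    (hstrip : ∀ p ∈ A, ∀ q ∈ A, |⟪x, zvec p - zvec q⟫| ≤ W / h) :
    (A.card : ℝ) ≤ (10 * W * D / c + C₀ + D + 1) * (ℓ / h) ∨
      ∃ m ∈ Finset.Icc 1 ⌊h⌋₊, ∃ v ∈ (Finset.box m : Finset (ℤ × ℤ)),
        |⟪x, zvec v⟫| ≤ W / ℓ ∧ (A.card : ℝ) ≤ (C₀ + D) * (ℓ / m) := by
  have hh0 : 0 < h := one_pos.trans_le hh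
  have hone : 1 ≤ C₀ * (ℓ / h) := by rwa [← mul_div_assoc, one_le_div hh0]
  have hDℓ : 0 ≤ D * (ℓ / h) := by positivity
  have hWDℓ : 0 ≤ 10 * W * D / c * (ℓ / h) := by positivity
  rcases card_le_or_exists_of_strip A hc hx (by positivity) (by positivity) hdiam hstrip with
    hcard | ⟨v, hv, hnorm, hinner⟩
  · left
    have : 10 * (W / h) * (D * ℓ) / c = 10 * W * D / c * (ℓ / h) := by field_simp
    linarith [div_nonneg hℓ.le hh0.le]
  rcases le_or_gt ((A.card : ℝ) - 1) (ℓ / h) with hsmall | hlarge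
  · left; linarith
  obtain ⟨m, hm, -⟩ := Int.existsUnique_mem_box v
  have hm1 : 1 ≤ m := by
    refine Nat.one_le_iff_ne_zero.mpr ?_
    rintro rfl
    exact hv (by simpa using hm)
  have hm0 : (0 : ℝ) < m := by exact_mod_cast hm1
  have hcard : (A.card : ℝ) - 1 ≤ D * (ℓ / m) := by
    rw [← mul_div_assoc, le_div_iff₀ hm0]
    have : 0 ≤ (A.card : ℝ) - 1 := (by positivity : 0 ≤ ℓ / h).trans hlarge.le
    exact (mul_le_mul_of_nonneg_left (le_norm_zvec_of_mem_box hm) this).trans hnorm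
  rcases le_or_gt (m : ℝ) h with hmh | hmh
  · right
    refine ⟨m, Finset.mem_Icc.mpr ⟨hm1, Nat.le_floor hmh⟩, v, hm, ?_, ?_⟩
    · rw [le_div_iff₀' hℓ, ← div_le_div_iff_of_pos_right hh0, mul_div_right_comm]
      exact (mul_le_mul_of_nonneg_right hlarge.le (abs_nonneg _)).trans hinner
    · have : 1 ≤ C₀ * (ℓ / m) := by
        rw [← mul_div_assoc, one_le_div hm0]; exact hmh.trans hhℓ
      linarith
  · left
    have : D * (ℓ / m) ≤ D * (ℓ / h) := by gcongr
    linarith [div_nonneg hℓ.le hh0.le]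

/-! ### Counting in annuli -/

section InverseGaussMap

variable {V : Type*} [NormedAddCommGroup V] [InnerProductSpace ℝ V]

/-- `X` sends each unit vector `ξ` to a boundary point with outer normal `ξ` of a convex set that
contains the ball of radius `c` and lies in the ball of radius `M` about the origin, and is
`K`-Lipschitz. -/
structure IsInverseGaussMap (X : V → V) (c M K : ℝ) : Prop where
  c_pos : 0 < c
  inner_le : ∀ {ξ η : V}, ‖ξ‖ = 1 → ‖η‖ = 1 → ⟪X η, ξ⟫ ≤ ⟪X ξ, ξ⟫
  le_inner : ∀ {ξ : V}, ‖ξ‖ = 1 → c ≤ ⟪X ξ, ξ⟫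
  norm_le : ∀ {ξ : V}, ‖ξ‖ = 1 → ‖X ξ‖ ≤ M
  norm_sub_le : ∀ {ξ η : V}, ‖ξ‖ = 1 → ‖η‖ = 1 → ‖X ξ - X η‖ ≤ K * ‖ξ - η‖

/-- The vectors `z ≠ 0` at which the support function, expressed through the inverse Gauss map `X`
as `z ↦ ⟪X (z / ‖z‖), z⟫`, differs from `R` by at most `1 / h`. -/
def supportAnnulus (X : V → V) (R h : ℝ) : Set V :=
  {z | z ≠ 0 ∧ |⟪X (NormedSpace.normalize z), z⟫ - R| ≤ 1 / h}

namespace IsInverseGaussMap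

variable {X : V → V} {c M K : ℝ}

lemma le_norm (hX : IsInverseGaussMap X c M K) {ξ : V} (hξ : ‖ξ‖ = 1) : c ≤ ‖X ξ‖ := by
  simpa [hξ] using (hX.le_inner hξ).trans (real_inner_le_norm _ _)

lemma M_nonneg (hX : IsInverseGaussMap X c M K) {ξ : V} (hξ : ‖ξ‖ = 1) : 0 ≤ M :=
  (norm_nonneg _).trans (hX.norm_le hξ)

lemma K_nonneg (hX : IsInverseGaussMap X c M K) {ξ : V} (hξ : ‖ξ‖ = 1) : 0 ≤ K := by
  have := (norm_nonneg _).trans (hX.norm_sub_le hξ ((norm_neg ξ).trans hξ))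
  rw [sub_neg_eq_add, ← two_smul ℝ, norm_smul, hξ, Real.norm_two] at this
  linarith

lemma inner_sub_inner_le (hX : IsInverseGaussMap X c M K) {ξ η : V} (hξ : ‖ξ‖ = 1) (hη : ‖η‖ = 1) :
    ⟪X η, η⟫ - ⟪X ξ, η⟫ ≤ K * ‖ξ - η‖ ^ 2 :=
  calc ⟪X η, η⟫ - ⟪X ξ, η⟫ = ⟪X η - X ξ, η - ξ⟫ + (⟪X η, ξ⟫ - ⟪X ξ, ξ⟫) := by
        simp only [inner_sub_left, inner_sub_right]; ring
    _ ≤ ‖X η - X ξ‖ * ‖η - ξ‖ + 0 :=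
        add_le_add (real_inner_le_norm _ _) (sub_nonpos.mpr (hX.inner_le hξ hη))
    _ ≤ K * ‖η - ξ‖ * ‖η - ξ‖ + 0 := by gcongr; exact hX.norm_sub_le hη hξ
    _ = K * ‖ξ - η‖ ^ 2 := by rw [norm_sub_rev]; ring

lemma abs_inner_self_sub_le (hX : IsInverseGaussMap X c M K) {ξ η : V} (hξ : ‖ξ‖ = 1)
    (hη : ‖η‖ = 1) : |⟪X ξ, ξ⟫ - ⟪X η, η⟫| ≤ (K + M) * ‖ξ - η‖ :=
  calc |⟪X ξ, ξ⟫ - ⟪X η, η⟫| = |⟪X ξ - X η, ξ⟫ + ⟪X η, ξ - η⟫| := by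
        simp only [inner_sub_left, inner_sub_right]; ring_nf
    _ ≤ ‖X ξ - X η‖ * ‖ξ‖ + ‖X η‖ * ‖ξ - η‖ :=
        (abs_add_le _ _).trans
          (add_le_add (abs_real_inner_le_norm _ _) (abs_real_inner_le_norm _ _))
    _ ≤ K * ‖ξ - η‖ * 1 + M * ‖ξ - η‖ := by
        rw [hξ]; gcongr
        · exact hX.norm_sub_le hξ hη
        · exact hX.norm_le hη
    _ = (K + M) * ‖ξ - η‖ := by ring

lemma norm_le_of_mem_supportAnnulus (hX : IsInverseGaussMap X c M K) {ℓ h : ℝ} (hℓ : 1 ≤ ℓ)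
    (hh : 1 ≤ h) {z : V} (hz : z ∈ supportAnnulus X (ℓ ^ 3) h) : ‖z‖ ≤ 2 * ℓ ^ 3 / c := by
  have hh1 : 1 / h ≤ 1 := (div_le_one (one_pos.trans_le hh)).mpr hh
  have hℓ3 : 1 ≤ ℓ ^ 3 := one_le_pow₀ hℓ
  rw [le_div_iff₀ hX.c_pos]
  calc ‖z‖ * c ≤ ‖z‖ * ⟪X (NormedSpace.normalize z), NormedSpace.normalize z⟫ := by
        gcongr; exact hX.le_inner (NormedSpace.norm_normalize_eq_one_iff.mpr hz.1)
    _ = ⟪X (NormedSpace.normalize z), z⟫ := by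
        rw [← real_inner_smul_right, NormedSpace.norm_smul_normalize]
    _ ≤ 2 * ℓ ^ 3 := by linarith [(abs_le.mp hz.2).2]

lemma abs_inner_sub_inner_normalize_le (hX : IsInverseGaussMap X c M K) {ξ z : V} (hξ : ‖ξ‖ = 1)
    (hz : z ≠ 0) : |⟪X ξ, z⟫ - ⟪X (NormedSpace.normalize z), z⟫|
      ≤ K * ‖ξ - NormedSpace.normalize z‖ ^ 2 * ‖z‖ := by
  set ζ := NormedSpace.normalize z
  have hζ : ‖ζ‖ = 1 := NormedSpace.norm_normalize_eq_one_iff.mpr hz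
  rw [← NormedSpace.norm_smul_normalize z, inner_smul_right, inner_smul_right, ← mul_sub, abs_mul,
    abs_norm, NormedSpace.norm_smul_normalize, mul_comm, abs_sub_comm,
    abs_of_nonneg (sub_nonneg.mpr (hX.inner_le hζ hξ))]
  gcongr
  exact hX.inner_sub_inner_le hξ hζ

lemma norm_sub_le_of_normalize (hX : IsInverseGaussMap X c M K) {z w : V} (hz : z ≠ 0)
    (hw : w ≠ 0) :
    ‖z - w‖ ≤ (1 + (K + M) / c) * (‖z‖ * ‖NormedSpace.normalize z - NormedSpace.normalize w‖)
      + |⟪X (NormedSpace.normalize z), z⟫ - ⟪X (NormedSpace.normalize w), w⟫| / c := by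
  set ζ := NormedSpace.normalize z
  set ω := NormedSpace.normalize w
  have hζ : ‖ζ‖ = 1 := NormedSpace.norm_normalize_eq_one_iff.mpr hz
  have hω : ‖ω‖ = 1 := NormedSpace.norm_normalize_eq_one_iff.mpr hw
  have hzζ : ‖z‖ • ζ = z := NormedSpace.norm_smul_normalize z
  have hwω : ‖w‖ • ω = w := NormedSpace.norm_smul_normalize w
  have hradii : |‖z‖ - ‖w‖| * c ≤ |⟪X ζ, z⟫ - ⟪X ω, w⟫| + (K + M) * (‖z‖ * ‖ζ - ω‖) := by
    have hz' : ⟪X ζ, z⟫ = ‖z‖ * ⟪X ζ, ζ⟫ := by rw [← inner_smul_right, hzζ]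
    have hw' : ⟪X ω, w⟫ = ‖w‖ * ⟪X ω, ω⟫ := by rw [← inner_smul_right, hwω]
    calc |‖z‖ - ‖w‖| * c ≤ |‖z‖ - ‖w‖| * |⟪X ω, ω⟫| := by
          gcongr; exact (hX.le_inner hω).trans (le_abs_self _)
      _ = |⟪X ζ, z⟫ - ⟪X ω, w⟫ - ‖z‖ * (⟪X ζ, ζ⟫ - ⟪X ω, ω⟫)| := by
          rw [← abs_mul, hz', hw']; ring_nf
      _ ≤ |⟪X ζ, z⟫ - ⟪X ω, w⟫| + ‖z‖ * |⟪X ζ, ζ⟫ - ⟪X ω, ω⟫| := by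
          refine (abs_sub _ _).trans_eq ?_
          rw [abs_mul, abs_norm]
      _ ≤ |⟪X ζ, z⟫ - ⟪X ω, w⟫| + ‖z‖ * ((K + M) * ‖ζ - ω‖) := by
          gcongr; exact hX.abs_inner_self_sub_le hζ hω
      _ = _ := by ring
  calc ‖z - w‖ = ‖‖z‖ • (ζ - ω) + (‖z‖ - ‖w‖) • ω‖ := by
        rw [smul_sub, sub_smul, hzζ, hwω]; congr 1; abel
    _ ≤ ‖z‖ * ‖ζ - ω‖ + |‖z‖ - ‖w‖| := by
        refine (norm_add_le _ _).trans_eq ?_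
        rw [norm_smul, norm_smul, hω, norm_norm, Real.norm_eq_abs, mul_one]
    _ ≤ ‖z‖ * ‖ζ - ω‖ + (|⟪X ζ, z⟫ - ⟪X ω, w⟫| + (K + M) * (‖z‖ * ‖ζ - ω‖)) / c := by
        gcongr; exact (le_div_iff₀ hX.c_pos).mpr hradii
    _ = _ := by ring

lemma abs_inner_sub_le_of_mem_supportAnnulus (hX : IsInverseGaussMap X c M K) {C₀ ℓ h : ℝ}
    (hℓ : 1 ≤ ℓ) (hh : 1 ≤ h) (hhℓ : h ≤ C₀ * ℓ) {ξ z : V} (hξ : ‖ξ‖ = 1)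
    (hz : z ∈ supportAnnulus X (ℓ ^ 3) h) (hξz : ‖ξ - NormedSpace.normalize z‖ ≤ 1 / ℓ ^ 2) :
    |⟪X ξ, z⟫ - ℓ ^ 3| ≤ (1 + 2 * K * C₀ / c) / h := by
  have hc := hX.c_pos
  have hK := hX.K_nonneg hξ
  have hh0 : 0 < h := one_pos.trans_le hh
  have hℓ0 : 0 < ℓ := one_pos.trans_le hℓ
  calc |⟪X ξ, z⟫ - ℓ ^ 3| ≤ |⟪X ξ, z⟫ - ⟪X (NormedSpace.normalize z), z⟫|
        + |⟪X (NormedSpace.normalize z), z⟫ - ℓ ^ 3| := abs_sub_le _ _ _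
    _ ≤ K * (1 / ℓ ^ 2) ^ 2 * (2 * ℓ ^ 3 / c) + 1 / h := by
        refine add_le_add ((hX.abs_inner_sub_inner_normalize_le hξ hz.1).trans ?_) hz.2
        gcongr
        exact hX.norm_le_of_mem_supportAnnulus hℓ hh hz
    _ = 2 * K / c * (1 / ℓ) + 1 / h := by field_simp
    _ ≤ 2 * K / c * (C₀ / h) + 1 / h := by
        gcongr 2 * K / c * ?_ + _
        rwa [div_le_div_iff₀ hℓ0 hh0, one_mul]
    _ = (1 + 2 * K * C₀ / c) / h := by ring

lemma norm_sub_le_of_mem_supportAnnulus (hX : IsInverseGaussMap X c M K) {ℓ h : ℝ} (hℓ : 1 ≤ ℓ)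
    (hh : 1 ≤ h) {z w : V} (hz : z ∈ supportAnnulus X (ℓ ^ 3) h)
    (hw : w ∈ supportAnnulus X (ℓ ^ 3) h)
    (hzw : ‖NormedSpace.normalize z - NormedSpace.normalize w‖ ≤ 2 / ℓ ^ 2) :
    ‖z - w‖ ≤ ((1 + (K + M) / c) * (4 / c) + 2 / c) * ℓ := by
  have hζ : ‖NormedSpace.normalize z‖ = 1 := NormedSpace.norm_normalize_eq_one_iff.mpr hz.1
  have hc := hX.c_pos
  have hK := hX.K_nonneg hζ
  have hM := hX.M_nonneg hζ
  have hh1 : 1 / h ≤ 1 := (div_le_one (one_pos.trans_le hh)).mpr hh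
  have hvalues : |⟪X (NormedSpace.normalize z), z⟫ - ⟪X (NormedSpace.normalize w), w⟫| ≤ 2 := by
    have := abs_le.mp hz.2
    have := abs_le.mp hw.2
    rw [abs_le]
    constructor <;> linarith
  calc ‖z - w‖
      ≤ (1 + (K + M) / c) * (‖z‖ * ‖NormedSpace.normalize z - NormedSpace.normalize w‖)
        + |⟪X (NormedSpace.normalize z), z⟫ - ⟪X (NormedSpace.normalize w), w⟫| / c :=
        hX.norm_sub_le_of_normalize hz.1 hw.1
    _ ≤ (1 + (K + M) / c) * (2 * ℓ ^ 3 / c * (2 / ℓ ^ 2)) + 2 / c := by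
        gcongr
        exact hX.norm_le_of_mem_supportAnnulus hℓ hh hz
    _ = (1 + (K + M) / c) * (4 / c) * ℓ + 2 / c := by field_simp; ring
    _ ≤ (1 + (K + M) / c) * (4 / c) * ℓ + 2 / c * ℓ := by
        gcongr; exact le_mul_of_one_le_right (by positivity) hℓ
    _ = _ := by ring

end IsInverseGaussMap

end InverseGaussMap

lemma exists_piece_dichotomy {X : E2 → E2} {c M K C₀ : ℝ} (hX : IsInverseGaussMap X c M K)
    (hC₀ : 0 ≤ C₀) :
    ∃ W A : ℝ, 0 ≤ A ∧ ∀ {ℓ h : ℝ}, 1 ≤ ℓ → 1 ≤ h → h ≤ C₀ * ℓ → ∀ {ξ : E2}, ‖ξ‖ = 1 →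
      ∀ F : Finset (ℤ × ℤ), (∀ k ∈ F, zvec k ∈ supportAnnulus X (ℓ ^ 3) h) →
        (∀ k ∈ F, ‖ξ - NormedSpace.normalize (zvec k)‖ ≤ 1 / ℓ ^ 2) →
        (F.card : ℝ) ≤ A * (ℓ / h) ∨ ∃ m ∈ Finset.Icc 1 ⌊h⌋₊,
          ∃ v ∈ (Finset.box m : Finset (ℤ × ℤ)),
            |⟪X ξ, zvec v⟫| ≤ W / ℓ ∧ (F.card : ℝ) ≤ A * (ℓ / m) := by
  have hc := hX.c_pos
  obtain ⟨e, he⟩ := exists_norm_eq (E := E2) zero_le_one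
  have hK := hX.K_nonneg he
  have hM := hX.M_nonneg he
  set W := 2 * (1 + 2 * K * C₀ / c) with hW_def
  set D := (1 + (K + M) / c) * (4 / c) + 2 / c
  have hW : 0 ≤ W := by positivity
  have hD : 0 ≤ D := by positivity
  refine ⟨W, 10 * W * D / c + C₀ + D + 1, by positivity, fun {ℓ h} hℓ hh hhℓ ξ hξ F hF hξF => ?_⟩
  have hℓ0 : 0 < ℓ := one_pos.trans_le hℓ
  refine (card_le_or_exists_mem_box F hc (hX.le_norm hξ) hW hD hℓ0 hh hhℓ ?_ ?_).imp_right ?_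
  · refine fun p hp q hq => hX.norm_sub_le_of_mem_supportAnnulus hℓ hh (hF p hp) (hF q hq) ?_
    calc _ ≤ ‖NormedSpace.normalize (zvec p) - ξ‖ + ‖ξ - NormedSpace.normalize (zvec q)‖ :=
          norm_sub_le_norm_sub_add_norm_sub _ _ _
      _ ≤ 1 / ℓ ^ 2 + 1 / ℓ ^ 2 := add_le_add ((norm_sub_rev _ _).trans_le (hξF p hp)) (hξF q hq)
      _ = 2 / ℓ ^ 2 := by ring
  · intro p hp q hq
    have hp' := hX.abs_inner_sub_le_of_mem_supportAnnulus hℓ hh hhℓ hξ (hF p hp) (hξF p hp)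
    have hq' := hX.abs_inner_sub_le_of_mem_supportAnnulus hℓ hh hhℓ hξ (hF q hq) (hξF q hq)
    calc |⟪X ξ, zvec p - zvec q⟫|
        = |(⟪X ξ, zvec p⟫ - ℓ ^ 3) - (⟪X ξ, zvec q⟫ - ℓ ^ 3)| := by
          rw [inner_sub_right, sub_sub_sub_cancel_right]
      _ ≤ (1 + 2 * K * C₀ / c) / h + (1 + 2 * K * C₀ / c) / h :=
          (abs_sub _ _).trans (add_le_add hp' hq')
      _ = W / h := by rw [hW_def]; ring
  · rintro ⟨m, hm, v, hv, hinner, hcard⟩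
    refine ⟨m, hm, v, hv, hinner, hcard.trans (mul_le_mul_of_nonneg_right ?_ (by positivity))⟩
    linarith [(by positivity : 0 ≤ 10 * W * D / c)]

lemma card_le_of_separated_of_inner_small {α : Type*} {X : E2 → E2} {c M K W δ m : ℝ}
    (hX : IsInverseGaussMap X c M K) (hδ : 0 < δ) (hm : 0 ≤ m)
    (hmod : ∀ ξ η : E2, ‖ξ‖ = 1 → ‖η‖ = 1 → ‖X ξ - X η‖ ≤ (2 + 2 * M / c) * W → ‖ξ - η‖ ≤ m)
    {v : E2} (hv : 1 ≤ ‖v‖) (S : Finset α) (f : α → E2) (hunit : ∀ a ∈ S, ‖f a‖ = 1)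
    (hsep : (S : Set α).Pairwise fun a b => δ ≤ ‖f a - f b‖)
    (hS : ∀ a ∈ S, |⟪X (f a), v⟫| ≤ W) : (S.card : ℝ) ≤ 2 * (Real.pi * m / δ + 1) := by
  classical
  have hv0 : v ≠ 0 := norm_pos_iff.mp (one_pos.trans_le hv)
  have ray : ∀ u : E2, ‖u‖ = 1 → (∀ a ∈ S, |⟪u, X (f a)⟫| ≤ W) →
      ((S.filter fun a => 0 ≤ stdOrientation.areaForm u (X (f a))).card : ℝ)
        ≤ Real.pi * m / δ + 1 := by
    intro u hu hW
    refine card_le_of_separated_directions _ f hδ hm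
      (fun a ha => hunit a (Finset.filter_subset _ _ ha))
      (hsep.mono (Finset.coe_subset.mpr (Finset.filter_subset _ _))) fun a ha b hb => ?_
    obtain ⟨ha, hsa⟩ := Finset.mem_filter.mp ha
    obtain ⟨hb, hsb⟩ := Finset.mem_filter.mp hb
    have ua := hunit a ha
    have ub := hunit b hb
    exact hmod _ _ ua ub (norm_sub_le_of_near_ray stdOrientation hX.c_pos hu ua ub (hX.le_inner ua)
      (hX.le_inner ub) (hX.norm_le ua) (hX.norm_le ub) (hX.inner_le ua ub) (hX.inner_le ub ua)
      (hW a ha) (hW b hb) hsa hsb)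
  set u := NormedSpace.normalize v
  have hu : ‖u‖ = 1 := NormedSpace.norm_normalize_eq_one_iff.mpr hv0
  have hW : ∀ a ∈ S, |⟪u, X (f a)⟫| ≤ W := fun a ha => by
    refine le_trans ?_ (hS a ha)
    conv_rhs => rw [← NormedSpace.norm_smul_normalize v, inner_smul_right, abs_mul, abs_norm,
      real_inner_comm]
    exact le_mul_of_one_le_left (abs_nonneg _) hv
  have hcover : S ⊆ (S.filter fun a => 0 ≤ stdOrientation.areaForm u (X (f a)))
      ∪ S.filter fun a => 0 ≤ stdOrientation.areaForm (-u) (X (f a)) := fun a ha => by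
    simpa [ha] using le_total 0 _
  have hneg := ray (-u) ((norm_neg u).trans hu) (by simpa only [inner_neg_left, abs_neg] using hW)
  have hcard : (S.card : ℝ) ≤ (_ + _ : ℕ) :=
    Nat.cast_le.mpr ((Finset.card_le_card hcover).trans (Finset.card_union_le _ _))
  rw [Nat.cast_add] at hcard
  linarith [ray u hu hW]

lemma card_le_of_separated_at_scale {α : Type*} {X : E2 → E2} {c M K W Cω C₀ ℓ H : ℝ}
    (hX : IsInverseGaussMap X c M K) (hCω : 0 ≤ Cω) (hℓ : 0 < ℓ) (hH : 0 < H) (hHℓ : H ≤ C₀ * ℓ)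
    (hmod : ∀ ξ η : E2, ‖ξ‖ = 1 → ‖η‖ = 1 → ‖X ξ - X η‖ ≤ (2 + 2 * M / c) * W / ℓ →
      ‖ξ - η‖ ≤ Cω / H ^ 2)
    {v : E2} (hv : 1 ≤ ‖v‖) (S : Finset α) (f : α → E2) (hunit : ∀ a ∈ S, ‖f a‖ = 1)
    (hsep : (S : Set α).Pairwise fun a b => 1 / ℓ ^ 2 ≤ ‖f a - f b‖)
    (hS : ∀ a ∈ S, |⟪X (f a), v⟫| ≤ W / ℓ) :
    (S.card : ℝ) ≤ 2 * (Real.pi * Cω + C₀ ^ 2) * (ℓ ^ 2 / H ^ 2) := by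
  have hcard := card_le_of_separated_of_inner_small hX (by positivity) (by positivity)
    (fun ξ η hξ hη hle => hmod ξ η hξ hη (hle.trans_eq (by ring))) hv S f hunit hsep hS
  have hone : 1 ≤ C₀ ^ 2 * (ℓ ^ 2 / H ^ 2) := by
    rw [← mul_div_assoc, ← mul_pow, ← div_pow]
    exact one_le_pow₀ ((one_le_div hH).mpr hHℓ)
  calc (S.card : ℝ) ≤ 2 * (Real.pi * (Cω / H ^ 2) / (1 / ℓ ^ 2) + 1) := hcard
    _ = 2 * (Real.pi * Cω * (ℓ ^ 2 / H ^ 2) + 1) := by field_simp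
    _ ≤ 2 * (Real.pi * Cω + C₀ ^ 2) * (ℓ ^ 2 / H ^ 2) := by linarith

lemma sum_box_le {G : ℕ → ℤ × ℤ → ℝ} {B h : ℝ} (hB : 0 ≤ B) (hh : 0 ≤ h)
    (hG : ∀ m ∈ Finset.Icc 1 ⌊h⌋₊, ∀ v ∈ (Finset.box m : Finset (ℤ × ℤ)), G m v ≤ B / m) :
    ∑ m ∈ Finset.Icc 1 ⌊h⌋₊, ∑ v ∈ Finset.box m, G m v ≤ 8 * B * h := by
  have hbox : ∀ m ∈ Finset.Icc 1 ⌊h⌋₊, ∑ v ∈ Finset.box m, G m v ≤ 8 * B := by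
    intro m hm
    have hm0 : m ≠ 0 := Nat.one_le_iff_ne_zero.mp (Finset.mem_Icc.mp hm).1
    refine (Finset.sum_le_card_nsmul _ _ _ (hG m hm)).trans_eq ?_
    rw [Int.card_box hm0, nsmul_eq_mul, Nat.cast_mul, Nat.cast_ofNat]
    field_simp
  calc _ ≤ ⌊h⌋₊ * (8 * B) := (Finset.sum_le_card_nsmul _ _ _ hbox).trans_eq (by simp)
    _ ≤ h * (8 * B) := by gcongr; exact Nat.floor_le hh
    _ = 8 * B * h := by ring

lemma sum_le_of_dichotomy {α : Type*} (Q : Finset α) (n : α → ℝ) (R : α → ℤ × ℤ → Prop)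
    {A B N h : ℝ} (hA : 0 ≤ A) (hB : 0 ≤ B) (hN : 0 ≤ N) (hh : 0 ≤ h)
    (hn : ∀ q ∈ Q, n q ≤ A ∨ ∃ m ∈ Finset.Icc 1 ⌊h⌋₊, ∃ v ∈ (Finset.box m : Finset (ℤ × ℤ)),
      R q v ∧ n q ≤ B / m)
    (hR : ∀ m ∈ Finset.Icc 1 ⌊h⌋₊, ∀ v ∈ (Finset.box m : Finset (ℤ × ℤ)), ∀ S ⊆ Q,
      (∀ q ∈ S, R q v) → (S.card : ℝ) ≤ N) :
    ∑ q ∈ Q, n q ≤ Q.card * A + 8 * N * B * h := by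
  classical
  let F : α → ℕ → ℤ × ℤ → ℝ := fun q m v => if R q v then B / m else 0
  have F_nonneg : ∀ q m v, 0 ≤ F q m v := fun q m v => by
    simp only [F]; split_ifs <;> positivity
  have hle : ∀ q ∈ Q, n q ≤ A + ∑ m ∈ Finset.Icc 1 ⌊h⌋₊, ∑ v ∈ Finset.box m, F q m v := by
    intro q hq
    rcases hn q hq with hqA | ⟨m, hm, v, hv, hqv, hqB⟩
    · exact hqA.trans (le_add_of_nonneg_right
        (Finset.sum_nonneg fun m _ => Finset.sum_nonneg fun v _ => F_nonneg q m v))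
    · calc n q ≤ F q m v := by simpa only [F, if_pos hqv] using hqB
        _ ≤ ∑ v ∈ Finset.box m, F q m v :=
          Finset.single_le_sum (f := F q m) (fun v _ => F_nonneg q m v) hv
        _ ≤ ∑ m ∈ Finset.Icc 1 ⌊h⌋₊, ∑ v ∈ Finset.box m, F q m v :=
          Finset.single_le_sum (f := fun m => ∑ v ∈ Finset.box m, F q m v)
            (fun m _ => Finset.sum_nonneg fun v _ => F_nonneg q m v) hm
        _ ≤ _ := le_add_of_nonneg_left hA
  have hfiber : ∀ m ∈ Finset.Icc 1 ⌊h⌋₊, ∀ v ∈ (Finset.box m : Finset (ℤ × ℤ)),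
      ∑ q ∈ Q, F q m v ≤ N * (B / m) := by
    intro m hm v hv
    rw [← Finset.sum_filter, Finset.sum_const, nsmul_eq_mul]
    gcongr
    exact hR m hm v hv _ (Finset.filter_subset _ _) fun q hq => (Finset.mem_filter.mp hq).2
  calc ∑ q ∈ Q, n q ≤ ∑ q ∈ Q, (A + ∑ m ∈ Finset.Icc 1 ⌊h⌋₊, ∑ v ∈ Finset.box m, F q m v) :=
        Finset.sum_le_sum hle
    _ = Q.card * A + ∑ m ∈ Finset.Icc 1 ⌊h⌋₊, ∑ v ∈ Finset.box m, ∑ q ∈ Q, F q m v := by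
        rw [Finset.sum_add_distrib, Finset.sum_const, nsmul_eq_mul, Finset.sum_comm]
        exact congrArg _ (Finset.sum_congr rfl fun m _ => Finset.sum_comm)
    _ ≤ Q.card * A + 8 * (N * B) * h := by
        gcongr
        exact sum_box_le (by positivity) hh fun m hm v hv =>
          (hfiber m hm v hv).trans_eq (mul_div_assoc _ _ _).symm
    _ = Q.card * A + 8 * N * B * h := by ring

/-- The hypothesis `hmod` says that `X` inverts a Gauss map whose modulus of continuity is
`O(1 / Hf ℓ ^ 2)` at scale `1 / ℓ`: only so many of the pieces of the annulus are almost parallel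
to a given lattice vector. -/
lemma exists_card_le_of_supportAnnulus {X : E2 → E2} {c M K : ℝ} (hX : IsInverseGaussMap X c M K)
    {Hf : ℝ → ℝ} {C₀ : ℝ} (hC₀ : 0 ≤ C₀) (hHf : ∀ ℓ, 1 ≤ ℓ → Hf ℓ ≤ C₀ * ℓ)
    (hmod : ∀ B : ℝ, ∃ C : ℝ, ∀ ℓ, 1 ≤ ℓ → ∀ ξ η : E2, ‖ξ‖ = 1 → ‖η‖ = 1 →
      ‖X ξ - X η‖ ≤ B / ℓ → ‖ξ - η‖ ≤ C / Hf ℓ ^ 2) :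
    ∃ C : ℝ, 0 ≤ C ∧ ∀ ℓ h : ℝ, 1 ≤ ℓ → 1 ≤ h → h ≤ Hf ℓ → ∀ P : Finset (ℤ × ℤ),
      (∀ k ∈ P, zvec k ∈ supportAnnulus X (ℓ ^ 3) h) → (P.card : ℝ) ≤ C * (ℓ ^ 3 / h) := by
  classical
  obtain ⟨W, A, hA, hpiece⟩ := exists_piece_dichotomy hX hC₀
  obtain ⟨Cω', hω'⟩ := hmod ((2 + 2 * M / c) * W)
  set Cω := max Cω' 0
  have hCω : 0 ≤ Cω := le_max_right _ _
  refine ⟨(2 * Real.pi + 1) * A + 16 * (Real.pi * Cω + C₀ ^ 2) * A, by positivity, ?_⟩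
  intro ℓ h hℓ hh hhH P hP
  have hℓ0 : 0 < ℓ := one_pos.trans_le hℓ
  have hh0 : 0 < h := one_pos.trans_le hh
  set H := Hf ℓ
  have hH0 : 0 < H := hh0.trans_le hhH
  have hHℓ : H ≤ C₀ * ℓ := hHf ℓ hℓ
  let dir : ℤ × ℤ → E2 := fun k => NormedSpace.normalize (zvec k)
  have hdir : ∀ k ∈ P, ‖dir k‖ = 1 := fun k hk =>
    NormedSpace.norm_normalize_eq_one_iff.mpr (hP k hk).1
  obtain ⟨Q, hQP, hsep, hQcard, hPcard⟩ :=
    exists_separated_directions P dir (δ := 1 / ℓ ^ 2) (by positivity) hdir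
  have hdirQ : ∀ q ∈ Q, ‖dir q‖ = 1 := fun q hq => hdir q (hQP hq)
  have hsum := sum_le_of_dichotomy Q
    (fun q => ((P.filter fun k => ‖dir q - dir k‖ ≤ 1 / ℓ ^ 2).card : ℝ))
    (fun q v => |⟪X (dir q), zvec v⟫| ≤ W / ℓ) (A := A * (ℓ / h)) (B := A * ℓ)
    (N := 2 * (Real.pi * Cω + C₀ ^ 2) * (ℓ ^ 2 / H ^ 2))
    (by positivity) (by positivity) (by positivity) hh0.le
    (fun q hq => by
      simpa only [mul_div_assoc] using hpiece hℓ hh (hhH.trans hHℓ) (hdirQ q hq) _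
        (fun k hk => hP k (Finset.mem_filter.mp hk).1) fun k hk => (Finset.mem_filter.mp hk).2)
    fun m hm v hv S hSQ hS => card_le_of_separated_at_scale hX hCω hℓ0 hH0 hHℓ
      (fun ξ η hξ hη hle => (hω' ℓ hℓ ξ η hξ hη hle).trans (by gcongr; exact le_max_left _ _))
      (le_trans (by exact_mod_cast (Finset.mem_Icc.mp hm).1) (le_norm_zvec_of_mem_box hv))
      S dir (fun q hq => hdirQ q (hSQ hq)) (hsep.mono (Finset.coe_subset.mpr hSQ)) hS
  have hQ : (Q.card : ℝ) ≤ (2 * Real.pi + 1) * ℓ ^ 2 := by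
    rw [div_div_eq_mul_div, div_one] at hQcard
    linarith [one_le_pow₀ (n := 2) hℓ]
  have hhH2 : h / H ^ 2 ≤ 1 / h := by
    rw [div_le_div_iff₀ (by positivity) hh0, one_mul, ← sq]
    gcongr
  calc (P.card : ℝ)
      ≤ Q.card * (A * (ℓ / h))
        + 8 * (2 * (Real.pi * Cω + C₀ ^ 2) * (ℓ ^ 2 / H ^ 2)) * (A * ℓ) * h := hPcard.trans hsum
    _ ≤ (2 * Real.pi + 1) * ℓ ^ 2 * (A * (ℓ / h))
        + 8 * (2 * (Real.pi * Cω + C₀ ^ 2) * (ℓ ^ 2 / H ^ 2)) * (A * ℓ) * h := by gcongr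
    _ = (2 * Real.pi + 1) * A * (ℓ ^ 3 / h)
        + 16 * (Real.pi * Cω + C₀ ^ 2) * A * (ℓ ^ 3 * (h / H ^ 2)) := by ring
    _ ≤ (2 * Real.pi + 1) * A * (ℓ ^ 3 / h)
        + 16 * (Real.pi * Cω + C₀ ^ 2) * A * (ℓ ^ 3 * (1 / h)) := by gcongr
    _ = _ := by ring

/-! ### The outer normal along the boundary -/

section Perpendicular

variable {V : Type*} [NormedAddCommGroup V] [InnerProductSpace ℝ V]

lemma eq_inner_smul_of_inner_eq_zero [Fact (Module.finrank ℝ V = 2)] {τ n w : V} (hτ : τ ≠ 0)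
    (hn : ‖n‖ = 1) (hnτ : ⟪n, τ⟫ = 0) (hwτ : ⟪w, τ⟫ = 0) : w = ⟪w, n⟫ • n := by
  have hmem {x : V} (hx : ⟪x, τ⟫ = 0) : x ∈ (ℝ ∙ τ)ᗮ := by
    rwa [Submodule.mem_orthogonal_singleton_iff_inner_left]
  have hn0 : (⟨n, hmem hnτ⟩ : (ℝ ∙ τ)ᗮ) ≠ 0 := fun h => by
    have : n = 0 := congrArg Subtype.val h
    simp [this] at hn
  obtain ⟨a, ha⟩ := (finrank_eq_one_iff_of_nonzero' _ hn0).mp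
    (Submodule.finrank_orthogonal_span_singleton hτ) ⟨w, hmem hwτ⟩
  obtain rfl : a • n = w := congrArg Subtype.val ha
  rw [real_inner_smul_left, real_inner_self_eq_norm_sq, hn, one_pow, mul_one]

lemma eq_of_inner_eq_zero_of_inner_pos [Fact (Module.finrank ℝ V = 2)] {τ n w x : V} (hτ : τ ≠ 0)
    (hn : ‖n‖ = 1) (hnτ : ⟪n, τ⟫ = 0) (hw : ‖w‖ = 1) (hwτ : ⟪w, τ⟫ = 0) (hnx : 0 < ⟪n, x⟫)
    (hwx : 0 < ⟪w, x⟫) : w = n := by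
  have hwn := eq_inner_smul_of_inner_eq_zero hτ hn hnτ hwτ
  have hpos : 0 < ⟪w, n⟫ := by
    rw [hwn, real_inner_smul_left] at hwx
    exact pos_of_mul_pos_left hwx hnx.le
  have hone : ⟪w, n⟫ = 1 := by
    have := congrArg norm hwn
    rwa [norm_smul, hw, hn, mul_one, Real.norm_of_nonneg hpos.le, eq_comm] at this
  rw [hwn, hone, one_smul]

lemma hasDerivAt_const_inner {f : ℝ → V} {f' : V} {t : ℝ} (w : V) (hf : HasDerivAt f f' t) :
    HasDerivAt (fun s => ⟪w, f s⟫) ⟪w, f'⟫ t := by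
  simpa using (hasDerivAt_const t w).inner ℝ hf

lemma inner_eq_zero_of_forall_inner_le {γ : ℝ → V} {t : ℝ} {τ w : V} (hd : HasDerivAt γ τ t)
    (hmax : ∀ s, ⟪w, γ s⟫ ≤ ⟪w, γ t⟫) : ⟪w, τ⟫ = 0 :=
  IsLocalMax.hasDerivAt_eq_zero (Filter.Eventually.of_forall hmax) (hasDerivAt_const_inner w hd)

lemma exists_supporting_unit_vector [CompleteSpace V] {Ω : Set V} (hconv : Convex ℝ Ω)
    (hopen : IsOpen Ω) {c : ℝ} (hc : 0 ≤ c) (hball : Metric.closedBall 0 c ⊆ Ω) {x : V}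
    (hx : x ∈ frontier Ω) :
    ∃ w : V, ‖w‖ = 1 ∧ (∀ y ∈ closure Ω, ⟪w, y⟫ ≤ ⟪w, x⟫) ∧ c ≤ ⟪w, x⟫ := by
  rw [hopen.frontier_eq] at hx
  obtain ⟨f, hf⟩ := geometric_hahn_banach_open_point hconv hopen hx.2
  obtain ⟨u, rfl⟩ := (InnerProductSpace.toDual ℝ V).surjective f
  simp only [InnerProductSpace.toDual_apply_apply] at hf
  have hu : u ≠ 0 := by
    rintro rfl
    simpa using hf 0 (hball (by simpa using hc))
  have hunit : ‖NormedSpace.normalize u‖ = 1 := NormedSpace.norm_normalize hu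
  have hle : ∀ y ∈ closure Ω, ⟪NormedSpace.normalize u, y⟫ ≤ ⟪NormedSpace.normalize u, x⟫ := by
    intro y hy
    refine closure_minimal (t := {y | ⟪NormedSpace.normalize u, y⟫ ≤ ⟪NormedSpace.normalize u, x⟫})
      (fun y hy => ?_) (isClosed_le (by fun_prop) (by fun_prop)) hy
    simp only [mem_ofPred_eq, NormedSpace.normalize, real_inner_smul_left]
    exact mul_le_mul_of_nonneg_left (hf y hy).le (by positivity)
  refine ⟨_, hunit, hle, ?_⟩
  have hc_mem : c • NormedSpace.normalize u ∈ closure Ω := subset_closure <| hball <| by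
    rw [mem_closedBall_zero_iff, norm_smul, hunit, mul_one, Real.norm_of_nonneg hc]
  have := hle _ hc_mem
  rwa [real_inner_smul_right, real_inner_self_eq_norm_sq, hunit, one_pow, mul_one] at this

end Perpendicular

lemma exists_abs_eq_one_forall_mul_pos {α : Type*} [TopologicalSpace α] [PreconnectedSpace α]
    {f : α → ℝ} (hf : Continuous f) (hf0 : ∀ t, f t ≠ 0) :
    ∃ σ : ℝ, |σ| = 1 ∧ ∀ t, 0 < σ * f t := by
  rcases isPreconnected_univ.eq_or_eq_neg_of_sq_eq hf.continuousOn hf.abs.continuousOn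
    (fun t _ => (sq_abs (f t)).symm) (fun _ => abs_ne_zero.mpr (hf0 _)) with h | h
  · refine ⟨1, abs_one, fun t => ?_⟩
    rw [one_mul, h (mem_univ t)]
    exact abs_pos.mpr (hf0 t)
  · refine ⟨-1, by simp, fun t => ?_⟩
    rw [h (mem_univ t), Pi.neg_apply, neg_one_mul, neg_neg]
    exact abs_pos.mpr (hf0 t)

/-- `n` is the field of outer unit normals along the boundary curve `γ` of `Ω` with tangent `γ'`,
and `c` is a lower bound for the distance of the tangent lines from the origin. The field
`norm_sub_eq` says that the normal turns as much as the tangent. -/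
structure NormalField (Ω : Set E2) (γ γ' n : ℝ → E2) (c : ℝ) : Prop where
  c_pos : 0 < c
  norm_eq_one : ∀ t, ‖n t‖ = 1
  inner_tangent : ∀ t, ⟪n t, γ' t⟫ = 0
  inner_le : ∀ t, ∀ y ∈ closure Ω, ⟪n t, y⟫ ≤ ⟪n t, γ t⟫
  le_inner : ∀ t, c ≤ ⟪n t, γ t⟫
  norm_sub_eq : ∀ s t, ‖n s - n t‖ = ‖γ' s - γ' t‖

section BoundaryCurve

variable {Ω : Set E2} {γ γ' γ'' : ℝ → E2} {L : ℝ}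

lemma BoundaryParam.continuous (hbp : BoundaryParam Ω γ γ' γ'' L) : Continuous γ :=
  continuous_iff_continuousAt.mpr fun t => (hbp.2.1 t).continuousAt

lemma BoundaryParam.mem_frontier (hbp : BoundaryParam Ω γ γ' γ'' L) (t : ℝ) :
    γ t ∈ frontier Ω := by
  obtain ⟨hL, -, -, -, hper, himg, -⟩ := hbp
  obtain ⟨s, hs, hst⟩ := hper.exists_mem_Ico₀ hL t
  exact himg ▸ ⟨s, hs, hst.symm⟩

lemma BoundaryParam.exists_normalField (hconv : Convex ℝ Ω) (hopen : IsOpen Ω)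
    (h0 : (0 : E2) ∈ Ω) (hbp : BoundaryParam Ω γ γ' γ'' L) :
    ∃ n c, NormalField Ω γ γ' n c := by
  have hγ := hbp.continuous
  have hmem := hbp.mem_frontier
  obtain ⟨-, hd, hcont, hunit, -⟩ := hbp
  obtain ⟨c, hc, hball⟩ := Metric.nhds_basis_closedBall.mem_iff.mp (hopen.mem_nhds h0)
  have hτ : ∀ t, γ' t ≠ 0 := fun t => norm_ne_zero_iff.mp (by rw [hunit t]; exact one_ne_zero)
  have hex : ∀ t, ∃ w : E2, ‖w‖ = 1 ∧ (∀ y ∈ closure Ω, ⟪w, y⟫ ≤ ⟪w, γ t⟫) ∧ c ≤ ⟪w, γ t⟫ ∧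
      ⟪w, γ' t⟫ = 0 := fun t => by
    obtain ⟨w, hw, hle, hlow⟩ := exists_supporting_unit_vector hconv hopen hc.le hball (hmem t)
    exact ⟨w, hw, hle, hlow, inner_eq_zero_of_forall_inner_le (hd t) fun s => hle _ (hmem s).1⟩
  set J := stdOrientation.rightAngleRotation
  have hJunit : ∀ t, ‖J (γ' t)‖ = 1 := fun t => by rw [J.norm_map, hunit]
  have hJperp : ∀ t, ⟪J (γ' t), γ' t⟫ = 0 := fun t =>
    stdOrientation.inner_rightAngleRotation_self _
  -- the orientation of the curve is constant because `J γ'` never vanishes on the radius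
  obtain ⟨σ, hσ, hpos⟩ := exists_abs_eq_one_forall_mul_pos
    (f := fun t => ⟪J (γ' t), γ t⟫) (by fun_prop) fun t h => by
      obtain ⟨w, -, -, hlow, hperp⟩ := hex t
      rw [eq_inner_smul_of_inner_eq_zero (hτ t) (hJunit t) (hJperp t) hperp,
        real_inner_smul_left, h, mul_zero] at hlow
      exact absurd hlow hc.not_ge
  have hnunit : ∀ t, ‖σ • J (γ' t)‖ = 1 := fun t => by
    rw [norm_smul, hJunit, Real.norm_eq_abs, hσ, one_mul]
  have hnperp : ∀ t, ⟪σ • J (γ' t), γ' t⟫ = 0 := fun t => by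
    rw [real_inner_smul_left, hJperp, mul_zero]
  have hsupp : ∀ t, (∀ y ∈ closure Ω, ⟪σ • J (γ' t), y⟫ ≤ ⟪σ • J (γ' t), γ t⟫) ∧
      c ≤ ⟪σ • J (γ' t), γ t⟫ := fun t => by
    obtain ⟨w, hw, hle, hlow, hperp⟩ := hex t
    obtain rfl := eq_of_inner_eq_zero_of_inner_pos (hτ t) (hnunit t) (hnperp t) hw hperp
      (by rw [real_inner_smul_left]; exact hpos t) (hc.trans_le hlow)
    exact ⟨hle, hlow⟩
  refine ⟨fun t => σ • J (γ' t), c, hc, hnunit, hnperp, fun t => (hsupp t).1,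
    fun t => (hsupp t).2, fun s t => ?_⟩
  rw [← smul_sub, norm_smul, Real.norm_eq_abs, hσ, one_mul, ← map_sub, J.norm_map]

end BoundaryCurve

/-! ### The derivative of the tangent -/

/-- `g` is an exactly `L`-periodic version of the derivative of the tangent `γ'`. The derivative
`γ''` of `BoundaryParam` is only defined up to null sets, and so need not be periodic. -/
structure TangentDeriv (γ' g : ℝ → E2) (L : ℝ) : Prop where
  periodic : Function.Periodic g L
  ae_hasDerivAt : ∀ᵐ t, HasDerivAt γ' (g t) t
  intervalIntegrable : ∀ s t : ℝ, IntervalIntegrable g volume s t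
  sub_eq_integral : ∀ s t : ℝ, γ' t - γ' s = ∫ u in s..t, g u

lemma locallyIntegrable_of_intervalIntegrable {F : Type*} [NormedAddCommGroup F] {f : ℝ → F}
    (hf : ∀ s t : ℝ, IntervalIntegrable f volume s t) : LocallyIntegrable f := fun x =>
  ⟨Icc (x - 1) (x + 1), Icc_mem_nhds (by linarith) (by linarith),
    (intervalIntegrable_iff_integrableOn_Icc_of_le (by linarith)).mp (hf _ _)⟩

lemma periodic_of_hasDerivAt {F : Type*} [NormedAddCommGroup F] [NormedSpace ℝ F] {f f' : ℝ → F}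
    {L : ℝ} (hf : ∀ t, HasDerivAt f (f' t) t) (hper : Function.Periodic f L) :
    Function.Periodic f' L := fun t => by
  have hshift : HasDerivAt (fun u => f (u + L)) (f' (t + L)) t := (hf (t + L)).comp_add_const t L
  rw [show (fun u => f (u + L)) = f from funext hper] at hshift
  exact hshift.unique (hf t)

lemma ae_of_ae_restrict_of_periodic {L : ℝ} (hL : 0 < L) {P : ℝ → Prop}
    (hP : Function.Periodic P L) (h : ∀ᵐ t ∂(volume.restrict (Icc 0 L)), P t) :
    ∀ᵐ t : ℝ, P t := by
  have htranslate : ∀ᵐ t : ℝ, ∀ m : ℤ, t + m * L ∈ Icc 0 L → P (t + m * L) := by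
    rw [ae_all_iff]
    intro m
    exact (measurePreserving_add_right volume ((m : ℝ) * L)).quasiMeasurePreserving.ae
      ((ae_restrict_iff' measurableSet_Icc).mp h)
  filter_upwards [htranslate] with t ht
  obtain ⟨m, hm, -⟩ := existsUnique_add_zsmul_mem_Ico hL t 0
  rw [zero_add, zsmul_eq_mul] at hm
  rw [← hP.int_mul m t]
  exact ht m ⟨hm.1, hm.2.le⟩

lemma inner_eq_zero_of_norm_eq_one {V : Type*} [NormedAddCommGroup V] [InnerProductSpace ℝ V]
    {f : ℝ → V} (hf : ∀ t, ‖f t‖ = 1) {t : ℝ} {v : V} (hv : HasDerivAt f v t) :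
    ⟪v, f t⟫ = 0 := by
  have hconst : (fun s => ⟪f s, f s⟫) = fun _ => (1 : ℝ) :=
    funext fun s => by rw [real_inner_self_eq_norm_sq, hf, one_pow]
  have hzero := (hconst ▸ hv.inner ℝ hv).unique (hasDerivAt_const t (1 : ℝ))
  rw [real_inner_comm] at hzero
  linarith

lemma deriv_deriv_nonpos_of_isLocalMax {f f' : ℝ → ℝ} {f'' t : ℝ} (hf : ∀ u, HasDerivAt f (f' u) u)
    (hf' : HasDerivAt f' f'' t) (hmax : IsLocalMax f t) : f'' ≤ 0 := by
  have hderiv : deriv f = f' := funext fun u => (hf u).deriv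
  by_contra! hpos
  have hmin : IsLocalMin f t := by
    apply isLocalMin_of_deriv_deriv_pos
    · rwa [hderiv, hf'.deriv]
    · rw [hderiv, hmax.hasDerivAt_eq_zero (hf t)]
    · exact (hf t).continuousAt
  have hconst : f =ᶠ[nhds t] fun _ => f t := by
    filter_upwards [hmin, hmax] with s hs hs' using le_antisymm hs' hs
  have hzero : f' =ᶠ[nhds t] fun _ => 0 := by
    simpa [hderiv] using hconst.deriv
  exact hpos.ne' (hf'.unique ((hasDerivAt_const t (0 : ℝ)).congr_of_eventuallyEq hzero))

section BoundaryCurve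

variable {Ω : Set E2} {γ γ' γ'' g n : ℝ → E2} {L c : ℝ}

lemma BoundaryParam.tangent_periodic (hbp : BoundaryParam Ω γ γ' γ'' L) :
    Function.Periodic γ' L :=
  periodic_of_hasDerivAt hbp.2.1 hbp.2.2.2.2.1

lemma BoundaryParam.exists_tangentDeriv (hbp : BoundaryParam Ω γ γ' γ'' L) :
    ∃ g, TangentDeriv γ' g L ∧ g =ᵐ[volume] γ'' := by
  have hper := hbp.tangent_periodic
  obtain ⟨-, -, -, -, -, -, -, hint₀, hftc⟩ := hbp
  have hint : ∀ s t : ℝ, IntervalIntegrable γ'' volume s t := fun s t =>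
    (hint₀ s).symm.trans (hint₀ t)
  have hderiv : ∀ᵐ t, HasDerivAt γ' (γ'' t) t := by
    filter_upwards [LocallyIntegrable.ae_hasDerivAt_integral
      (locallyIntegrable_of_intervalIntegrable hint)] with t ht
    rw [funext hftc]
    exact (ht 0).const_add _
  have hae : deriv γ' =ᵐ[volume] γ'' := by
    filter_upwards [hderiv] with t ht using ht.deriv
  refine ⟨deriv γ', ⟨fun t => ?_, ?_, fun s t => ?_, fun s t => ?_⟩, hae⟩
  · rw [← deriv_comp_add_const, show (fun u => γ' (u + L)) = γ' from funext hper]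
  · filter_upwards [hderiv] with t ht using ht.differentiableAt.hasDerivAt
  · exact (hint s t).congr_ae (ae_restrict_of_ae hae.symm)
  · rw [intervalIntegral.integral_congr_ae (hae.mono fun x hx _ => hx), hftc t, hftc s,
      ← intervalIntegral.integral_add_adjacent_intervals (hint₀ s) (hint s t)]
    abel

lemma NormalField.eq_neg_norm_smul_of_hasDerivAt (hn : NormalField Ω γ γ' n c)
    (hbp : BoundaryParam Ω γ γ' γ'' L) {t : ℝ} {v : E2} (hv : HasDerivAt γ' v t) :
    v = -(‖v‖ • n t) := by
  have hmem := hbp.mem_frontier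
  obtain ⟨-, hd, -, hunit, -⟩ := hbp
  have hτ : γ' t ≠ 0 := norm_ne_zero_iff.mp (by rw [hunit t]; exact one_ne_zero)
  have hvn : v = ⟪v, n t⟫ • n t := eq_inner_smul_of_inner_eq_zero hτ (hn.norm_eq_one t)
    (hn.inner_tangent t) (inner_eq_zero_of_norm_eq_one hunit hv)
  -- `s ↦ ⟪n t, γ s⟫` has a maximum at `t`
  have hle : ⟪n t, v⟫ ≤ 0 := deriv_deriv_nonpos_of_isLocalMax
    (fun u => hasDerivAt_const_inner (n t) (hd u)) (hasDerivAt_const_inner (n t) hv)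
    (Filter.Eventually.of_forall fun s => hn.inner_le t _ (hmem s).1)
  have hnorm : ‖v‖ = -⟪v, n t⟫ := by
    rw [real_inner_comm] at hle
    conv_lhs => rw [hvn]
    rw [norm_smul, hn.norm_eq_one, mul_one, Real.norm_of_nonpos hle]
  rw [hnorm, neg_smul, neg_neg]
  exact hvn

end BoundaryCurve

/-! ### Periodic curves -/

section Periodic

lemma exists_abs_add_int_mul_sub_eq_dist (L s t : ℝ) :
    ∃ m : ℤ, |s + m * L - t| = dist (s : AddCircle L) (t : AddCircle L) := by
  refine ⟨-round (L⁻¹ * (s - t)), ?_⟩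
  rw [dist_eq_norm, ← AddCircle.coe_sub, AddCircle.norm_eq]
  congr 1
  push_cast
  ring

lemma uniformContinuous_of_periodic {β : Type*} [UniformSpace β] {f : ℝ → β} {L : ℝ} (hL : 0 < L)
    (hf : Continuous f) (hper : Function.Periodic f L) : UniformContinuous f := by
  have := Fact.mk hL
  have hlift : Continuous (hper.lift : AddCircle L → β) := continuous_coinduced_dom.mpr hf
  have hcoe : UniformContinuous (QuotientAddGroup.mk' (AddSubgroup.zmultiples L)) :=
    uniformContinuous_of_continuousAt_zero _ (AddCircle.continuous_mk' L).continuousAt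
  exact (CompactSpace.uniformContinuous_of_continuous hlift).comp hcoe

lemma exists_dist_le_mul_dist_of_injective {α β : Type*} [PseudoMetricSpace α] [CompactSpace α]
    [MetricSpace β] {f : α → β} (hf : Continuous f) (hinj : f.Injective) {δ C : ℝ} (hδ : 0 < δ)
    (hlocal : ∀ x y, dist x y < δ → dist x y ≤ C * dist (f x) (f y)) :
    ∃ K : ℝ, 0 ≤ K ∧ ∀ x y, dist x y ≤ K * dist (f x) (f y) := by
  have hcompact : IsCompact {p : α × α | δ ≤ dist p.1 p.2} :=
    (isClosed_le continuous_const continuous_dist).isCompact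
  obtain ⟨e, he, hle⟩ : ∃ e > 0, ∀ p ∈ {p : α × α | δ ≤ dist p.1 p.2},
      e ≤ dist (f p.1) (f p.2) := by
    refine hcompact.exists_forall_le' (Continuous.continuousOn (by fun_prop)) fun p hp => ?_
    refine dist_pos.mpr (hinj.ne fun heq => ?_)
    rw [mem_ofPred_eq, heq, dist_self] at hp
    exact hp.not_gt hδ
  set D := Metric.diam (univ : Set α)
  refine ⟨max |C| (D / e), by positivity, fun x y => ?_⟩
  rcases lt_or_ge (dist x y) δ with hxy | hxy
  · refine (hlocal x y hxy).trans ?_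
    gcongr
    exact (le_abs_self C).trans (le_max_left _ _)
  · calc dist x y ≤ D :=
          Metric.dist_le_diam_of_mem isCompact_univ.isBounded (mem_univ x) (mem_univ y)
      _ = D / e * e := by field_simp
      _ ≤ max |C| (D / e) * dist (f x) (f y) := by
          gcongr
          exacts [le_max_right _ _, hle (x, y) hxy]

lemma exists_abs_add_int_mul_sub_le_of_periodic {β : Type*} [MetricSpace β] {f : ℝ → β}
    {L δ C : ℝ} (hL : 0 < L) (hf : Continuous f) (hper : Function.Periodic f L)
    (hinj : InjOn f (Ico 0 L)) (hδ : 0 < δ)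
    (hlocal : ∀ s t, |s - t| < δ → |s - t| ≤ C * dist (f s) (f t)) :
    ∃ K : ℝ, 0 ≤ K ∧ ∀ s t, ∃ m : ℤ,
      |s + m * L - t| ≤ L ∧ |s + m * L - t| ≤ K * dist (f s) (f t) := by
  have := Fact.mk hL
  have hlift : Continuous (hper.lift : AddCircle L → β) := continuous_coinduced_dom.mpr hf
  have hlift_inj : (hper.lift : AddCircle L → β).Injective := fun x y hxy => by
    have hrep (z : AddCircle L) : ∃ u ∈ Ico 0 L, (u : AddCircle L) = z :=
      ⟨AddCircle.equivIco L 0 z, by simpa only [zero_add] using (AddCircle.equivIco L 0 z).2,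
        AddCircle.coe_equivIco⟩
    obtain ⟨s, hs, rfl⟩ := hrep x
    obtain ⟨t, ht, rfl⟩ := hrep y
    rw [hinj hs ht hxy]
  obtain ⟨K, hK, hle⟩ := exists_dist_le_mul_dist_of_injective hlift hlift_inj (C := C) hδ
    fun x y hxy => by
      obtain ⟨s, rfl⟩ := QuotientAddGroup.mk_surjective x
      obtain ⟨t, rfl⟩ := QuotientAddGroup.mk_surjective y
      obtain ⟨m, hm⟩ := exists_abs_add_int_mul_sub_eq_dist L s t
      have := hlocal _ _ (hm.trans_lt hxy)
      rwa [hper.int_mul m s, hm] at this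
  refine ⟨K, hK, fun s t => ?_⟩
  obtain ⟨m, hm⟩ := exists_abs_add_int_mul_sub_eq_dist L s t
  refine ⟨m, ?_, hm.le.trans (hle s t)⟩
  rw [hm, dist_eq_norm]
  have := AddCircle.norm_le_half_period L (x := (s : AddCircle L) - t) hL.ne'
  rw [abs_of_pos hL] at this
  linarith

end Periodic

/-! ### The boundary point as a Lipschitz function of the normal -/

lemma abs_sub_le_two_mul_norm_sub {F : Type*} [NormedAddCommGroup F] [NormedSpace ℝ F]
    {γ γ' : ℝ → F} {η : ℝ} (hd : ∀ t, HasDerivAt γ (γ' t) t) (hunit : ∀ t, ‖γ' t‖ = 1)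
    (hη : ∀ s t, |s - t| < η → ‖γ' s - γ' t‖ ≤ 1 / 2) {s t : ℝ} (hst : |s - t| < η) :
    |s - t| ≤ 2 * ‖γ s - γ t‖ := by
  have hball : ∀ u ∈ Metric.ball t η,
      HasDerivWithinAt (fun u => γ u - u • γ' t) (γ' u - (1 : ℝ) • γ' t) (Metric.ball t η) u :=
    fun u _ => ((hd u).sub ((hasDerivAt_id u).smul_const (γ' t))).hasDerivWithinAt
  have hlin := (convex_ball t η).norm_image_sub_le_of_norm_hasDerivWithin_le hball
    (fun u hu => by rw [one_smul]; exact hη u t hu)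
    (Metric.mem_ball_self ((abs_nonneg _).trans_lt hst)) (y := s) hst
  have hsplit : (s - t) • γ' t = (γ s - γ t) - (γ s - s • γ' t - (γ t - t • γ' t)) := by
    rw [sub_smul]; abel
  have hnorm := norm_sub_le (γ s - γ t) (γ s - s • γ' t - (γ t - t • γ' t))
  rw [← hsplit, norm_smul, hunit, mul_one, Real.norm_eq_abs] at hnorm
  rw [Real.norm_eq_abs] at hlin
  linarith

lemma notMem_of_forall_inner_le {V : Type*} [NormedAddCommGroup V] [InnerProductSpace ℝ V]
    {Ω : Set V} (hopen : IsOpen Ω) {w z : V} (hw : w ≠ 0)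
    (hmax : ∀ y ∈ Ω, ⟪w, y⟫ ≤ ⟪w, z⟫) : z ∉ Ω := fun hz => by
  have hlocal : IsLocalMax (innerSL ℝ w) z := by
    filter_upwards [hopen.mem_nhds hz] with y hy using hmax y hy
  have hzero : innerSL ℝ w = 0 := hlocal.hasFDerivAt_eq_zero (innerSL ℝ w).hasFDerivAt
  exact hw (inner_self_eq_zero.mp (congrArg (fun f => f w) hzero))

section BoundaryCurve

variable {Ω : Set E2} {γ γ' γ'' g n : ℝ → E2} {L c a : ℝ}

lemma BoundaryParam.exists_norm_tangent_sub_le (hbp : BoundaryParam Ω γ γ' γ'' L) :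
    ∃ η > 0, ∀ s t, |s - t| < η → ‖γ' s - γ' t‖ ≤ 1 / 2 := by
  obtain ⟨η, hη, hlt⟩ := Metric.uniformContinuous_iff.mp
    (uniformContinuous_of_periodic hbp.1 hbp.2.2.1 hbp.tangent_periodic) (1 / 2) (by norm_num)
  refine ⟨η, hη, fun s t hst => ?_⟩
  rw [← dist_eq_norm]
  exact (hlt hst).le

lemma BoundaryParam.exists_arc_le_mul_chord (hbp : BoundaryParam Ω γ γ' γ'' L) :
    ∃ C : ℝ, 0 ≤ C ∧ ∀ s t, ∃ m : ℤ,
      |s + m * L - t| ≤ L ∧ |s + m * L - t| ≤ C * ‖γ s - γ t‖ := by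
  obtain ⟨η, hη, hturn⟩ := hbp.exists_norm_tangent_sub_le
  have hγ := hbp.continuous
  obtain ⟨hL, hd, -, hunit, hper, -, hinj, -⟩ := hbp
  simp only [← dist_eq_norm]
  refine exists_abs_add_int_mul_sub_le_of_periodic (C := 2) hL hγ hper hinj hη fun s t hst => ?_
  rw [dist_eq_norm]
  exact abs_sub_le_two_mul_norm_sub hd hunit hturn hst

lemma BoundaryParam.exists_eq_of_forall_inner_le (hopen : IsOpen Ω)
    (hbp : BoundaryParam Ω γ γ' γ'' L) (hn : NormalField Ω γ γ' n c) {ξ z : E2} (hξ : ‖ξ‖ = 1)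
    (hz : z ∈ closure Ω) (hpos : 0 < ⟪ξ, z⟫) (hmax : ∀ y ∈ closure Ω, ⟪ξ, y⟫ ≤ ⟪ξ, z⟫) :
    ∃ t, γ t = z ∧ n t = ξ := by
  have hfr : z ∈ frontier Ω := by
    rw [hopen.frontier_eq]
    exact ⟨hz, notMem_of_forall_inner_le hopen (norm_ne_zero_iff.mp (hξ ▸ one_ne_zero))
      fun y hy => hmax y (subset_closure hy)⟩
  have hmem := hbp.mem_frontier
  obtain ⟨-, hd, -, hunit, -, himg, -⟩ := hbp
  rw [← himg] at hfr
  obtain ⟨t, -, rfl⟩ := hfr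
  have hτ : γ' t ≠ 0 := norm_ne_zero_iff.mp (by rw [hunit t]; exact one_ne_zero)
  refine ⟨t, rfl, eq_of_inner_eq_zero_of_inner_pos hτ hξ ?_ (hn.norm_eq_one t)
    (hn.inner_tangent t) hpos (hn.c_pos.trans_le (hn.le_inner t))⟩
  exact inner_eq_zero_of_forall_inner_le (hd t) fun s => hmax _ (hmem s).1

lemma NormalField.inner_tangentDeriv_le (hbp : BoundaryParam Ω γ γ' γ'' L)
    (hn : NormalField Ω γ γ' n c) {t u : ℝ} {v : E2} (hv : HasDerivAt γ' v u) (hav : a ≤ ‖v‖)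
    (hturn : ‖γ' t - γ' u‖ ≤ 1 / 2) : ⟪n t, v⟫ ≤ -(a / 2) := by
  have hangle : 1 / 2 ≤ ⟪n t, n u⟫ := by
    have hsq := norm_sub_sq_of_norm_eq_one (hn.norm_eq_one t) (hn.norm_eq_one u)
    rw [hn.norm_sub_eq] at hsq
    nlinarith [norm_nonneg (γ' t - γ' u)]
  rw [hn.eq_neg_norm_smul_of_hasDerivAt hbp hv, inner_neg_right, real_inner_smul_right]
  nlinarith [norm_nonneg v]

lemma NormalField.inner_tangent_sub_le (hbp : BoundaryParam Ω γ γ' γ'' L)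
    (hn : NormalField Ω γ γ' n c) (hg : TangentDeriv γ' g L) (hlow : ∀ᵐ t, a ≤ ‖g t‖) {s t : ℝ}
    (hts : t ≤ s) (hturn : ∀ u ∈ Icc t s, ‖γ' t - γ' u‖ ≤ 1 / 2) :
    ⟪n t, γ' s - γ' t⟫ ≤ -(a / 2) * (s - t) := by
  have hint : IntervalIntegrable (fun u => ⟪n t, g u⟫) volume t s :=
    ⟨(innerSL ℝ (n t)).integrable_comp (hg.intervalIntegrable t s).1,
      (innerSL ℝ (n t)).integrable_comp (hg.intervalIntegrable t s).2⟩
  calc ⟪n t, γ' s - γ' t⟫ = ∫ u in t..s, ⟪n t, g u⟫ := by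
        rw [hg.sub_eq_integral t s]
        exact ((innerSL ℝ (n t)).intervalIntegral_comp_comm (hg.intervalIntegrable t s)).symm
    _ ≤ ∫ _ in t..s, -(a / 2) := by
        refine intervalIntegral.integral_mono_ae_restrict hts hint (by simp) ?_
        rw [Filter.EventuallyLE, ae_restrict_iff' measurableSet_Icc]
        filter_upwards [hlow, hg.ae_hasDerivAt] with u hau hu hmem
        exact hn.inner_tangentDeriv_le hbp hu hau (hturn u hmem)
    _ = -(a / 2) * (s - t) := by
        rw [intervalIntegral.integral_const, smul_eq_mul, mul_comm]

lemma NormalField.mul_abs_sub_le_norm_sub (hbp : BoundaryParam Ω γ γ' γ'' L)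
    (hn : NormalField Ω γ γ' n c) (hg : TangentDeriv γ' g L) (hlow : ∀ᵐ t, a ≤ ‖g t‖) {η : ℝ}
    (hη : ∀ s t, |s - t| < η → ‖γ' s - γ' t‖ ≤ 1 / 2) {s t : ℝ} (hst : |s - t| < η) :
    a / 2 * |s - t| ≤ ‖n s - n t‖ := by
  wlog hts : t ≤ s generalizing s t
  · rw [abs_sub_comm, norm_sub_rev]
    exact this (by rwa [abs_sub_comm]) (le_of_not_ge hts)
  rw [abs_of_nonneg (sub_nonneg.mpr hts)] at hst ⊢
  have hinner := hn.inner_tangent_sub_le hbp hg hlow hts fun u hu => hη t u <| by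
    rw [abs_sub_comm, abs_of_nonneg (sub_nonneg.mpr hu.1)]
    linarith [hu.2]
  have hcs := (abs_le.mp (abs_real_inner_le_norm (n t) (γ' s - γ' t))).1
  rw [hn.norm_eq_one, one_mul, ← hn.norm_sub_eq] at hcs
  linarith

lemma NormalField.periodic (hn : NormalField Ω γ γ' n c) (hper : Function.Periodic γ' L) :
    Function.Periodic n L := fun t => by
  rw [← sub_eq_zero, ← norm_eq_zero, hn.norm_sub_eq, hper t, sub_self, norm_zero]

lemma NormalField.continuous (hn : NormalField Ω γ γ' n c) (hγ' : Continuous γ') :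
    Continuous n := continuous_iff_continuousAt.mpr fun t => by
  rw [ContinuousAt, tendsto_iff_norm_sub_tendsto_zero]
  simp only [hn.norm_sub_eq]
  exact tendsto_iff_norm_sub_tendsto_zero.mp (hγ'.tendsto t)

/-- If two boundary points had the same normal, the segment between them would lie on the boundary,
and its points near one end would have the same normal as well. -/
lemma NormalField.eq_of_eq (hconv : Convex ℝ Ω) (hopen : IsOpen Ω)
    (hbp : BoundaryParam Ω γ γ' γ'' L) (hn : NormalField Ω γ γ' n c) (ha : 0 < a) {η : ℝ}
    (hη : 0 < η) (hlocal : ∀ s t, |s - t| < η → a * |s - t| ≤ ‖n s - n t‖) {s t : ℝ}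
    (hst : n s = n t) : γ s = γ t := by
  obtain ⟨C, -, hchord⟩ := hbp.exists_arc_le_mul_chord
  have hper := hbp.2.2.2.2.1
  have hcl : ∀ u, γ u ∈ closure Ω := fun u => (hbp.mem_frontier u).1
  have hinner : ⟪n t, γ s⟫ = ⟪n t, γ t⟫ :=
    le_antisymm (hn.inner_le t _ (hcl s)) (hst ▸ hn.inner_le s _ (hcl t))
  have hsmall : ∀ᶠ θ in nhdsWithin (0 : ℝ) (Ioi 0), C * (θ * ‖γ s - γ t‖) < η :=
    ((Continuous.tendsto' (by fun_prop) (0 : ℝ) 0 (by simp)).mono_left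
      nhdsWithin_le_nhds).eventually_lt_const hη
  obtain ⟨θ, hθη, hθ0, hθ1⟩ := (hsmall.and (Ioc_mem_nhdsGT one_pos)).exists
  have hz : ⟪n t, γ t + θ • (γ s - γ t)⟫ = ⟪n t, γ t⟫ := by
    rw [inner_add_right, real_inner_smul_right, inner_sub_right, hinner, sub_self, mul_zero,
      add_zero]
  obtain ⟨u, huz, hun⟩ := hbp.exists_eq_of_forall_inner_le hopen hn (hn.norm_eq_one t)
    (hconv.closure.add_smul_sub_mem (hcl t) (hcl s) ⟨hθ0.le, hθ1⟩)
    (hz ▸ hn.c_pos.trans_le (hn.le_inner t)) (hz ▸ hn.inner_le t)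
  have hchord_u : γ u - γ t = θ • (γ s - γ t) := by rw [huz, add_sub_cancel_left]
  obtain ⟨m, -, hm⟩ := hchord u t
  have hclose := hlocal (u + m * L) t (hm.trans_lt (by
    rwa [hchord_u, norm_smul, Real.norm_of_nonneg hθ0.le]))
  rw [(hn.periodic hbp.tangent_periodic).int_mul m u, hun, sub_self, norm_zero] at hclose
  have hut : u + m * L = t := by
    have := nonpos_of_mul_nonpos_right hclose ha
    exact sub_eq_zero.mp (abs_eq_zero.mp (this.antisymm (abs_nonneg _)))
  have hθ : θ • (γ s - γ t) = 0 := by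
    rw [← hchord_u, ← hper.int_mul m u, hut, sub_self]
  exact sub_eq_zero.mp ((smul_eq_zero.mp hθ).resolve_left hθ0.ne')

lemma NormalField.exists_norm_sub_le_mul_norm_sub (hconv : Convex ℝ Ω) (hopen : IsOpen Ω)
    (hbp : BoundaryParam Ω γ γ' γ'' L) (hn : NormalField Ω γ γ' n c) (hg : TangentDeriv γ' g L)
    (ha : 0 < a) (hlow : ∀ᵐ t, a ≤ ‖g t‖) :
    ∃ K : ℝ, 0 ≤ K ∧ ∀ s t, ‖γ s - γ t‖ ≤ K * ‖n s - n t‖ := by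
  obtain ⟨η, hη, hturn⟩ := hbp.exists_norm_tangent_sub_le
  have hlocal : ∀ s t, |s - t| < η → a / 2 * |s - t| ≤ ‖n s - n t‖ := fun s t =>
    hn.mul_abs_sub_le_norm_sub hbp hg hlow hturn
  have hinj : InjOn n (Ico 0 L) := fun s hs t ht hst =>
    hbp.2.2.2.2.2.2.1 hs ht (hn.eq_of_eq hconv hopen hbp (half_pos ha) hη hlocal hst)
  obtain ⟨K, hK, hle⟩ := exists_abs_add_int_mul_sub_le_of_periodic (C := 2 / a) hbp.1
    (hn.continuous hbp.2.2.1) (hn.periodic hbp.tangent_periodic) hinj hη fun s t hst => by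
      rw [dist_eq_norm, div_mul_eq_mul_div, le_div_iff₀ ha]
      linarith [hlocal s t hst]
  obtain ⟨-, hd, -, hunit, hper, -⟩ := hbp
  refine ⟨K, hK, fun s t => ?_⟩
  obtain ⟨m, -, hm⟩ := hle s t
  have hspeed : ‖γ (s + m * L) - γ t‖ ≤ 1 * ‖s + m * L - t‖ :=
    convex_univ.norm_image_sub_le_of_norm_hasDerivWithin_le
      (fun u _ => (hd u).hasDerivWithinAt) (fun u _ => (hunit u).le) trivial trivial
  rw [hper.int_mul m s, one_mul] at hspeed
  exact hspeed.trans (dist_eq_norm (n s) (n t) ▸ hm)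

end BoundaryCurve

/-! ### The modulus of continuity of the normal -/

lemma log_two_add_pos {x : ℝ} (hx : 0 ≤ x) : 0 < Real.log (2 + x) :=
  Real.log_pos (by linarith)

lemma le_add_mul_log_rpow_div {κ T p : ℝ} (hκ : 0 ≤ κ) (hT : 0 ≤ T) (hp : 0 ≤ p) :
    κ ≤ T + κ * Real.log (2 + κ) ^ p / Real.log (2 + T) ^ p := by
  have hlogT := log_two_add_pos hT
  have hlogκ := log_two_add_pos hκ
  rcases le_total κ T with hκT | hTκ
  · exact hκT.trans (le_add_of_nonneg_right (by positivity))
  · refine le_add_of_nonneg_of_le hT ?_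
    rw [le_div_iff₀ (by positivity)]
    gcongr

section Integral

variable {E : Type*} [NormedAddCommGroup E] [NormedSpace ℝ E] {g : ℝ → E} {p : ℝ}

lemma norm_integral_le_add_integral_log_rpow_div (hp : 0 ≤ p)
    (hg : ∀ s t : ℝ, IntervalIntegrable g volume s t)
    (hglog : ∀ s t : ℝ,
      IntervalIntegrable (fun u => ‖g u‖ * Real.log (2 + ‖g u‖) ^ p) volume s t)
    {T : ℝ} (hT : 0 ≤ T) {s t : ℝ} (hst : s ≤ t) :
    ‖∫ u in s..t, g u‖ ≤
      T * (t - s) + (∫ u in s..t, ‖g u‖ * Real.log (2 + ‖g u‖) ^ p) / Real.log (2 + T) ^ p := by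
  have hdiv := (hglog s t).div_const (Real.log (2 + T) ^ p)
  calc ‖∫ u in s..t, g u‖ ≤ ∫ u in s..t, ‖g u‖ :=
        intervalIntegral.norm_integral_le_integral_norm hst
    _ ≤ ∫ u in s..t, (T + ‖g u‖ * Real.log (2 + ‖g u‖) ^ p / Real.log (2 + T) ^ p) :=
        intervalIntegral.integral_mono_on hst (hg s t).norm (intervalIntegrable_const.add hdiv)
          fun u _ => le_add_mul_log_rpow_div (norm_nonneg _) hT hp
    _ = _ := by
        rw [intervalIntegral.integral_add intervalIntegrable_const hdiv,
          intervalIntegral.integral_const, intervalIntegral.integral_div, smul_eq_mul, mul_comm T]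

lemma integral_le_integral_period {F : ℝ → ℝ} {L : ℝ} (hper : Function.Periodic F L)
    (hF : ∀ t, 0 ≤ F t) (hint : ∀ s t : ℝ, IntervalIntegrable F volume s t) {s t : ℝ}
    (hst : s ≤ t) (htL : t ≤ s + L) : ∫ u in s..t, F u ≤ ∫ u in (0 : ℝ)..L, F u := by
  calc ∫ u in s..t, F u ≤ ∫ u in s..(s + L), F u :=
        intervalIntegral.integral_mono_interval le_rfl hst htL (Filter.Eventually.of_forall hF)
          (hint _ _)
    _ = ∫ u in (0 : ℝ)..L, F u := by rw [hper.intervalIntegral_add_eq s 0, zero_add]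

end Integral

lemma TangentDeriv.exists_norm_tangent_sub_le {γ' g : ℝ → E2} {L p : ℝ}
    (hg : TangentDeriv γ' g L) (hp : 0 ≤ p) (hL : 0 ≤ L)
    (hglog : ∀ s t : ℝ,
      IntervalIntegrable (fun u => ‖g u‖ * Real.log (2 + ‖g u‖) ^ p) volume s t) :
    ∃ I : ℝ, 0 ≤ I ∧ ∀ T, 0 ≤ T → ∀ s t, |s - t| ≤ L →
      ‖γ' s - γ' t‖ ≤ T * |s - t| + I / Real.log (2 + T) ^ p := by
  have hnonneg : ∀ u, 0 ≤ ‖g u‖ * Real.log (2 + ‖g u‖) ^ p := fun u => by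
    have := log_two_add_pos (norm_nonneg (g u))
    positivity
  refine ⟨∫ u in (0 : ℝ)..L, ‖g u‖ * Real.log (2 + ‖g u‖) ^ p,
    intervalIntegral.integral_nonneg hL fun u _ => hnonneg u, fun T hT s t hst => ?_⟩
  wlog hts : t ≤ s generalizing s t
  · rw [norm_sub_rev, abs_sub_comm]
    exact this t s (by rwa [abs_sub_comm]) (le_of_not_ge hts)
  rw [abs_of_nonneg (sub_nonneg.mpr hts)] at hst ⊢
  have hlogT := log_two_add_pos hT
  rw [hg.sub_eq_integral t s]
  refine (norm_integral_le_add_integral_log_rpow_div hp hg.intervalIntegrable hglog hT hts).trans ?_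
  gcongr
  exact integral_le_integral_period (fun u => by simp only [hg.periodic u]) hnonneg hglog hts
    (by linarith)

lemma NormalField.exists_norm_sub_le_add_div_log_rpow {Ω : Set E2} {γ γ' γ'' g n : ℝ → E2}
    {L c p : ℝ} (hbp : BoundaryParam Ω γ γ' γ'' L) (hn : NormalField Ω γ γ' n c)
    (hg : TangentDeriv γ' g L) (hp : 0 ≤ p)
    (hglog : ∀ s t : ℝ,
      IntervalIntegrable (fun u => ‖g u‖ * Real.log (2 + ‖g u‖) ^ p) volume s t) :
    ∃ C I : ℝ, 0 ≤ C ∧ 0 ≤ I ∧ ∀ T, 0 ≤ T → ∀ s t,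
      ‖n s - n t‖ ≤ C * T * ‖γ s - γ t‖ + I / Real.log (2 + T) ^ p := by
  obtain ⟨C, hC, harc⟩ := hbp.exists_arc_le_mul_chord
  obtain ⟨I, hI, htangent⟩ := hg.exists_norm_tangent_sub_le hp hbp.1.le hglog
  refine ⟨C, I, hC, hI, fun T hT s t => ?_⟩
  obtain ⟨m, hmL, hmC⟩ := harc s t
  calc ‖n s - n t‖ = ‖γ' (s + m * L) - γ' t‖ := by
        rw [hn.norm_sub_eq, hbp.tangent_periodic.int_mul m s]
    _ ≤ T * |s + m * L - t| + I / Real.log (2 + T) ^ p := htangent T hT _ _ hmL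
    _ ≤ T * (C * ‖γ s - γ t‖) + I / Real.log (2 + T) ^ p := by gcongr
    _ = _ := by ring

/-! ### Powers of the logarithm -/

lemma log_two_add_pow_le {x : ℝ} (hx : 0 ≤ x) {m : ℕ} (hm : m ≠ 0) :
    Real.log (2 + x ^ m) ≤ m * Real.log (2 + x) := by
  rw [← Real.log_pow]
  refine Real.log_le_log (by positivity) ?_
  calc 2 + x ^ m ≤ 2 ^ m + x ^ m := by gcongr; exact le_self_pow₀ one_le_two hm
    _ ≤ (2 + x) ^ m := pow_add_pow_le zero_le_two hx hm

lemma log_two_add_pow_rpow_le {x p : ℝ} (hx : 0 ≤ x) (hp : 0 ≤ p) {m : ℕ} (hm : m ≠ 0) :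
    Real.log (2 + x ^ m) ^ p ≤ m ^ p * Real.log (2 + x) ^ p := by
  rw [← Real.mul_rpow (by positivity) (log_two_add_pos hx).le]
  exact Real.rpow_le_rpow (log_two_add_pos (by positivity)).le (log_two_add_pow_le hx hm) hp

lemma log_rpow_le_rpow_mul {x p : ℝ} (hx : 1 ≤ x) (hp : 0 < p) : Real.log x ^ p ≤ p ^ p * x := by
  have hx0 : 0 ≤ x := zero_le_one.trans hx
  have hlog := Real.log_le_rpow_div hx0 (inv_pos.mpr hp)
  rw [div_inv_eq_mul] at hlog
  calc Real.log x ^ p ≤ (x ^ p⁻¹ * p) ^ p := Real.rpow_le_rpow (Real.log_nonneg hx) hlog hp.le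
    _ = p ^ p * x := by
        rw [Real.mul_rpow (by positivity) hp.le, Real.rpow_inv_rpow hx0 hp.ne', mul_comm]

lemma exists_log_two_add_pow_rpow_le {p : ℝ} (hp : 0 < p) {m : ℕ} (hm : m ≠ 0) :
    ∃ C : ℝ, 0 ≤ C ∧ ∀ x, 1 ≤ x → Real.log (2 + x ^ m) ^ p ≤ C * x := by
  refine ⟨m ^ p * (p ^ p * 3), by positivity, fun x hx => ?_⟩
  calc Real.log (2 + x ^ m) ^ p ≤ m ^ p * Real.log (2 + x) ^ p :=
        log_two_add_pow_rpow_le (by linarith) hp.le hm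
    _ ≤ m ^ p * (p ^ p * (2 + x)) := by gcongr; exact log_rpow_le_rpow_mul (by linarith) hp
    _ ≤ m ^ p * (p ^ p * (3 * x)) := by gcongr; linarith
    _ = _ := by ring

/-- The threshold `T = √ℓ` balances the two terms of the modulus of continuity at scale `ℓ⁻¹`. -/
lemma exists_modulus_le_div_log_rpow {p C I B : ℝ} (hp : 0 < p) (hC : 0 ≤ C) (hI : 0 ≤ I)
    (hB : 0 ≤ B) :
    ∃ C', ∀ ℓ, 1 ≤ ℓ → C * √ℓ * (B / ℓ) + I / Real.log (2 + √ℓ) ^ p ≤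
      C' / Real.log (2 + ℓ ^ 3) ^ p := by
  obtain ⟨D, -, hlog⟩ := exists_log_two_add_pow_rpow_le hp (show 6 ≠ 0 by norm_num)
  refine ⟨C * B * D + 6 ^ p * I, fun ℓ hℓ => ?_⟩
  obtain ⟨x, hx, rfl⟩ : ∃ x, 1 ≤ x ∧ x ^ 2 = ℓ :=
    ⟨√ℓ, Real.one_le_sqrt.mpr hℓ, Real.sq_sqrt (by linarith)⟩
  have hx0 : 0 < x := by linarith
  rw [Real.sqrt_sq hx0.le, ← pow_mul, add_div]
  have hlogx := log_two_add_pos hx0.le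
  have hlogx6 := log_two_add_pos (pow_nonneg hx0.le 6)
  gcongr ?_ + ?_
  · rw [le_div_iff₀ (by positivity)]
    calc C * x * (B / x ^ 2) * Real.log (2 + x ^ 6) ^ p ≤ C * x * (B / x ^ 2) * (D * x) := by
          gcongr; exact hlog x hx
      _ = C * B * D := by field_simp
  · rw [div_le_div_iff₀ (by positivity) (by positivity)]
    calc I * Real.log (2 + x ^ 6) ^ p ≤ I * ((6 : ℕ) ^ p * Real.log (2 + x) ^ p) := by
          gcongr; exact log_two_add_pow_rpow_le hx0.le hp.le (by norm_num)
      _ = 6 ^ p * I * Real.log (2 + x) ^ p := by push_cast; ring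

/-! ### From the boundary curve to the lattice count -/

lemma suppFn_eq_inner_of_forall_inner_le {Ω : Set E2} {x z : E2} (hx : x ∈ closure Ω)
    (hmax : ∀ y ∈ closure Ω, ⟪y, z⟫ ≤ ⟪x, z⟫) : suppFn Ω z = ⟪x, z⟫ := by
  refine IsLUB.csSup_eq ⟨?_, fun b hb => ?_⟩ ((closure_nonempty_iff.mp ⟨x, hx⟩).image _)
  · rintro _ ⟨y, hy, rfl⟩
    exact hmax y (subset_closure hy)
  · have hclosed : IsClosed {y : E2 | ⟪y, z⟫ ≤ b} := isClosed_le (by fun_prop) continuous_const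
    exact closure_minimal (fun y hy => hb ⟨y, hy, rfl⟩) hclosed hx

lemma suppFn_zero (Ω : Set E2) : suppFn Ω 0 = 0 := by
  rcases Ω.eq_empty_or_nonempty with rfl | hne
  · simp [suppFn]
  · simp [suppFn, hne.image_const]

section NormalField

variable {Ω : Set E2} {γ γ' γ'' n : ℝ → E2} {L c : ℝ}

lemma NormalField.exists_eq (hopen : IsOpen Ω) (hbdd : Bornology.IsBounded Ω)
    (h0 : (0 : E2) ∈ Ω) (hbp : BoundaryParam Ω γ γ' γ'' L) (hn : NormalField Ω γ γ' n c)
    {ξ : E2} (hξ : ‖ξ‖ = 1) : ∃ t, n t = ξ := by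
  obtain ⟨z, hz, hmax⟩ := hbdd.isCompact_closure.exists_isMaxOn ⟨0, subset_closure h0⟩
    (f := fun y => (⟪ξ, y⟫ : ℝ)) (by fun_prop)
  obtain ⟨δ, hδ, hball⟩ := Metric.nhds_basis_closedBall.mem_iff.mp (hopen.mem_nhds h0)
  have hδξ : δ • ξ ∈ Ω := hball <| by
    rw [mem_closedBall_zero_iff, norm_smul, hξ, Real.norm_of_nonneg hδ.le, mul_one]
  have hpos : 0 < ⟪ξ, z⟫ := hδ.trans_le <| by
    simpa [inner_smul_right, real_inner_self_eq_norm_sq, hξ] using hmax (subset_closure hδξ)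
  obtain ⟨t, -, ht⟩ := hbp.exists_eq_of_forall_inner_le hopen hn hξ hz hpos fun y hy => hmax hy
  exact ⟨t, ht⟩

lemma NormalField.isInverseGaussMap (hbp : BoundaryParam Ω γ γ' γ'' L)
    (hn : NormalField Ω γ γ' n c) {M K : ℝ} (hM : ∀ y ∈ closure Ω, ‖y‖ ≤ M)
    (hK : ∀ s t, ‖γ s - γ t‖ ≤ K * ‖n s - n t‖) {τ : E2 → ℝ} (hτ : ∀ ξ, ‖ξ‖ = 1 → n (τ ξ) = ξ) :
    IsInverseGaussMap (γ ∘ τ) c M K where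
  c_pos := hn.c_pos
  inner_le {ξ η} hξ _ := by
    simpa only [Function.comp_apply, hτ ξ hξ, real_inner_comm ξ] using
      hn.inner_le (τ ξ) _ (hbp.mem_frontier (τ η)).1
  le_inner {ξ} hξ := by
    simpa only [Function.comp_apply, hτ ξ hξ, real_inner_comm ξ] using hn.le_inner (τ ξ)
  norm_le {ξ} _ := hM _ (hbp.mem_frontier (τ ξ)).1
  norm_sub_le {ξ η} hξ hη := by
    simpa only [Function.comp_apply, hτ ξ hξ, hτ η hη] using hK (τ ξ) (τ η)

lemma NormalField.suppFn_eq_inner (hbp : BoundaryParam Ω γ γ' γ'' L)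
    (hn : NormalField Ω γ γ' n c) {z : E2} {t : ℝ} (ht : n t = NormedSpace.normalize z) :
    suppFn Ω z = ⟪γ t, z⟫ := by
  have hinner : ∀ y : E2, ⟪y, z⟫ = ‖z‖ * ⟪n t, y⟫ := fun y => by
    rw [ht, ← real_inner_smul_left, NormedSpace.norm_smul_normalize, real_inner_comm]
  refine suppFn_eq_inner_of_forall_inner_le (hbp.mem_frontier t).1 fun y hy => ?_
  rw [hinner, hinner]
  exact mul_le_mul_of_nonneg_left (hn.inner_le t y hy) (norm_nonneg z)

end NormalField

lemma exists_isInverseGaussMap {Ω : Set E2} (hconv : Convex ℝ Ω) (hopen : IsOpen Ω)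
    (hbdd : Bornology.IsBounded Ω) (h0 : (0 : E2) ∈ Ω) {γ γ' γ'' : ℝ → E2} {L : ℝ}
    (hbp : BoundaryParam Ω γ γ' γ'' L) {a p : ℝ} (ha : 0 < a) (hp : 0 ≤ p)
    (hlow : ∀ᵐ t ∂(volume.restrict (Icc 0 L)), a ≤ ‖γ'' t‖)
    (hLlogL : IntegrableOn (fun t => ‖γ'' t‖ * Real.log (2 + ‖γ'' t‖) ^ p) (Icc 0 L)) :
    ∃ X c M K, IsInverseGaussMap X c M K ∧
      (∀ z ≠ 0, suppFn Ω z = ⟪X (NormedSpace.normalize z), z⟫) ∧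
      ∃ C I : ℝ, 0 ≤ C ∧ 0 ≤ I ∧ ∀ T, 0 ≤ T → ∀ ξ η, ‖ξ‖ = 1 → ‖η‖ = 1 →
        ‖ξ - η‖ ≤ C * T * ‖X ξ - X η‖ + I / Real.log (2 + T) ^ p := by
  obtain ⟨n, c, hn⟩ := hbp.exists_normalField hconv hopen h0
  obtain ⟨g, hg, hgae⟩ := hbp.exists_tangentDeriv
  have hgae_Icc : g =ᵐ[volume.restrict (Icc 0 L)] γ'' := ae_restrict_of_ae hgae
  have hlow_g : ∀ᵐ t, a ≤ ‖g t‖ := by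
    refine ae_of_ae_restrict_of_periodic hbp.1 (fun t => by rw [hg.periodic t]) ?_
    filter_upwards [hlow, hgae_Icc] with t hat hgt using hgt ▸ hat
  have hglog : ∀ s t : ℝ,
      IntervalIntegrable (fun t => ‖g t‖ * Real.log (2 + ‖g t‖) ^ p) volume s t := by
    refine Function.Periodic.intervalIntegrable₀ (fun t => by simp only [hg.periodic t])
      hbp.1.ne' ?_
    rw [intervalIntegrable_iff_integrableOn_Icc_of_le hbp.1.le]
    refine Integrable.congr hLlogL ?_
    filter_upwards [hgae_Icc] with t hgt using by rw [hgt]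
  obtain ⟨K, -, hK⟩ := hn.exists_norm_sub_le_mul_norm_sub hconv hopen hbp hg ha hlow_g
  obtain ⟨C, I, hC, hI, hmod⟩ := hn.exists_norm_sub_le_add_div_log_rpow hbp hg hp hglog
  obtain ⟨M, hM⟩ := hbdd.closure.exists_norm_le
  have hsurj : ∀ ξ : E2, ∃ t, ‖ξ‖ = 1 → n t = ξ := fun ξ => by
    by_cases hξ : ‖ξ‖ = 1
    · exact (hn.exists_eq hopen hbdd h0 hbp hξ).imp fun t ht _ => ht
    · exact ⟨0, fun h => absurd h hξ⟩
  choose τ hτ using hsurj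
  refine ⟨γ ∘ τ, c, M, K, hn.isInverseGaussMap hbp hM hK hτ, fun z hz => ?_, C, I, hC, hI,
    fun T hT ξ η hξ hη => ?_⟩
  · exact hn.suppFn_eq_inner hbp (hτ _ (NormedSpace.norm_normalize hz))
  · simpa only [Function.comp_apply, hτ ξ hξ, hτ η hη] using hmod T hT (τ ξ) (τ η)

lemma exists_signed_lattice_map {s : ℝ} (hs : s ∈ ({1, -1} : Set ℝ)) :
    ∃ φ : (Fin 2 → ℤ) → ℤ × ℤ, Function.Injective φ ∧ ∀ k, zvec (φ k) = s • ek k := by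
  obtain ⟨σ, hσ, rfl⟩ : ∃ σ : ℤ, σ ≠ 0 ∧ (σ : ℝ) = s := by
    rcases hs with rfl | rfl
    exacts [⟨1, by norm_num⟩, ⟨-1, by norm_num⟩]
  refine ⟨fun k => (σ * k 0, σ * k 1), fun k l hkl => ?_, fun k => ?_⟩
  · obtain ⟨h₀, h₁⟩ := Prod.mk.inj hkl
    ext i
    fin_cases i
    exacts [mul_left_cancel₀ hσ h₀, mul_left_cancel₀ hσ h₁]
  · ext i
    fin_cases i <;> simp [zvec, ek]

lemma natCard_le_of_forall_finset {α : Type*} {A : Set α} {N : ℝ}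
    (hN : ∀ P : Finset α, (P : Set α) ⊆ A → (P.card : ℝ) ≤ N) : (Nat.card A : ℝ) ≤ N := by
  rcases A.finite_or_infinite with hfin | hinf
  · rw [Nat.card_eq_card_finite_toFinset hfin]
    exact hN _ hfin.coe_toFinset.subset
  · have := hinf.to_subtype
    simpa using hN ∅ (by simp)

lemma annCount_le_of_forall_finset {Ω : Set E2} {X : E2 → E2}
    (hsupp : ∀ z ≠ 0, suppFn Ω z = ⟪X (NormedSpace.normalize z), z⟫) {s : ℝ}
    (hs : s ∈ ({1, -1} : Set ℝ)) {r h h' N : ℝ} (hr : 1 / h < r) (hh' : 0 < h') (hle : h' ≤ h)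
    (hN : ∀ P : Finset (ℤ × ℤ), (∀ k ∈ P, zvec k ∈ supportAnnulus X r h') → (P.card : ℝ) ≤ N) :
    (annCount Ω s r h : ℝ) ≤ N := by
  obtain ⟨φ, hφ, hφs⟩ := exists_signed_lattice_map hs
  refine natCard_le_of_forall_finset fun P hP => ?_
  rw [← Finset.card_image_of_injective P hφ]
  refine hN _ fun k hk => ?_
  obtain ⟨l, hl, rfl⟩ := Finset.mem_image.mp hk
  have hann : |suppFn Ω (zvec (φ l)) - r| ≤ 1 / h := hφs l ▸ hP hl
  have hne : zvec (φ l) ≠ 0 := fun hzero => by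
    rw [hzero, suppFn_zero, zero_sub, abs_neg] at hann
    exact (hann.trans_lt hr).not_ge (le_abs_self r)
  exact ⟨hne, hsupp _ hne ▸ hann.trans (one_div_le_one_div_of_le hh' hle)⟩

lemma exists_annCount_le {Ω : Set E2} (hconv : Convex ℝ Ω) (hopen : IsOpen Ω)
    (hbdd : Bornology.IsBounded Ω) (h0 : (0 : E2) ∈ Ω) {γ γ' γ'' : ℝ → E2} {L : ℝ}
    (hbp : BoundaryParam Ω γ γ' γ'' L) {a p : ℝ} (ha : 0 < a) (hp : 0 < p)
    (hlow : ∀ᵐ t ∂(volume.restrict (Icc 0 L)), a ≤ ‖γ'' t‖)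
    (hLlogL : IntegrableOn (fun t => ‖γ'' t‖ * Real.log (2 + ‖γ'' t‖) ^ p) (Icc 0 L)) :
    ∃ C : ℝ, 0 ≤ C ∧ ∀ s ∈ ({1, -1} : Set ℝ), ∀ r h h' : ℝ, 2 ≤ r → 1 ≤ h' → h' ≤ h →
      h' ≤ Real.log (2 + r) ^ (p / 2) → (annCount Ω s r h : ℝ) ≤ C * (r / h') := by
  obtain ⟨X, c, M, K, hX, hsupp, C₁, I, hC₁, hI, hmod⟩ :=
    exists_isInverseGaussMap hconv hopen hbdd h0 hbp ha hp.le hlow hLlogL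
  obtain ⟨C₀, hC₀, hlog⟩ := exists_log_two_add_pow_rpow_le (half_pos hp) three_ne_zero
  have hturn : ∀ B, ∃ C, ∀ ℓ : ℝ, 1 ≤ ℓ → ∀ ξ η : E2, ‖ξ‖ = 1 → ‖η‖ = 1 →
      ‖X ξ - X η‖ ≤ B / ℓ → ‖ξ - η‖ ≤ C / (Real.log (2 + ℓ ^ 3) ^ (p / 2)) ^ 2 := by
    intro B
    obtain ⟨C', hC'⟩ := exists_modulus_le_div_log_rpow hp hC₁ hI (abs_nonneg B)
    refine ⟨C', fun ℓ hℓ ξ η hξ hη hXX => ?_⟩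
    have hlog0 := log_two_add_pos (show 0 ≤ ℓ ^ 3 by positivity)
    rw [← Real.rpow_mul_natCast hlog0.le, Nat.cast_ofNat, div_mul_cancel₀ p two_ne_zero]
    refine le_trans ?_ (hC' ℓ hℓ)
    refine (hmod √ℓ (Real.sqrt_nonneg ℓ) ξ η hξ hη).trans ?_
    gcongr
    exact hXX.trans (by gcongr; exact le_abs_self B)
  obtain ⟨C, hC, hcount⟩ := exists_card_le_of_supportAnnulus hX hC₀ hlog hturn
  refine ⟨C, hC, fun s hs r h h' hr hh' hle hlogr => ?_⟩
  obtain ⟨ℓ, hℓ, rfl⟩ : ∃ ℓ : ℝ, 1 ≤ ℓ ∧ ℓ ^ 3 = r :=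
    ⟨r ^ (3 : ℝ)⁻¹, Real.one_le_rpow (by linarith) (by norm_num),
      Real.rpow_inv_natCast_pow (by linarith) three_ne_zero⟩
  have hh : 1 / h ≤ 1 := (one_div_le_one_div_of_le one_pos (hh'.trans hle)).trans_eq one_div_one
  exact annCount_le_of_forall_finset hsupp hs (by linarith) (one_pos.trans_le hh') hle
    (hcount ℓ h' hℓ hh' hlogr)

theorem statement6_general (Ω : Set E2) (hconv : Convex ℝ Ω) (hopen : IsOpen Ω)
    (hbdd : Bornology.IsBounded Ω) (h0 : (0 : E2) ∈ Ω)
    (γ γ' γ'' : ℝ → E2) (L : ℝ) (hbp : BoundaryParam Ω γ γ' γ'' L)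
    (a p : ℝ) (ha : 0 < a) (hp : 0 < p)
    (hlow : ∀ᵐ t ∂(volume.restrict (Icc 0 L)), a ≤ ‖γ'' t‖)
    (hLlogL : IntegrableOn (fun t => ‖γ'' t‖ * Real.log (2 + ‖γ'' t‖) ^ p) (Icc 0 L)) :
    ∃ C : ℝ, ∀ s ∈ ({1, -1} : Set ℝ), ∀ r h : ℝ, 2 ≤ r → 1 ≤ h →
      (annCount Ω s r h : ℝ) ≤ C * r * (h⁻¹ + Real.log (2 + r) ^ (-(p / 2))) := by
  obtain ⟨C, hC, hcount⟩ := exists_annCount_le hconv hopen hbdd h0 hbp ha hp hlow hLlogL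
  refine ⟨C, fun s hs r h hr hh => ?_⟩
  have hlog : 1 ≤ Real.log (2 + r) := by
    rw [Real.le_log_iff_exp_le (by linarith)]
    linarith [Real.exp_one_lt_d9]
  set H := Real.log (2 + r) ^ (p / 2) with hH_def
  have hH : 1 ≤ H := Real.one_le_rpow hlog (half_pos hp).le
  rw [Real.rpow_neg (by linarith), ← hH_def]
  calc (annCount Ω s r h : ℝ) ≤ C * (r / min h H) :=
        hcount s hs r h (min h H) hr (le_min hh hH) (min_le_left h H) (min_le_right h H)
    _ = C * r * (min h H)⁻¹ := by ring
    _ ≤ C * r * (h⁻¹ + H⁻¹) := by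
        gcongr
        rcases min_choice h H with hmin | hmin <;> rw [hmin]
        exacts [le_add_of_nonneg_right (by positivity), le_add_of_nonneg_left (by positivity)]

/-- Proposition 3.2: if `Ω` is a bounded open convex planar domain containing
the origin, with `C¹` boundary, absolutely continuous unit tangent, curvature
`κ = ‖γ''‖ ≥ a > 0` a.e. and `κ ∈ L log^{2+ε} L(∂Ω)`, then
`S^±(r,h) ≤ C r [h^{−1} + (log(2+r))^{−1−ε/2}]` for all `r ≥ 2`, `h ≥ 1`. -/
theorem statement6 (Ω : Set E2) (hconv : Convex ℝ Ω) (hopen : IsOpen Ω)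
    (hbdd : Bornology.IsBounded Ω) (h0 : (0 : E2) ∈ Ω)
    (γ γ' γ'' : ℝ → E2) (L : ℝ) (hbp : BoundaryParam Ω γ γ' γ'' L)
    (a ε : ℝ) (ha : 0 < a) (hε : 0 < ε)
    (hlow : ∀ᵐ t ∂(volume.restrict (Set.Icc 0 L)), a ≤ ‖γ'' t‖)
    (hLlogL : IntegrableOn
      (fun t => ‖γ'' t‖ * Real.log (2 + ‖γ'' t‖) ^ ((2 : ℝ) + ε)) (Set.Icc 0 L)) :
    ∃ C : ℝ, ∀ s ∈ ({1, -1} : Set ℝ), ∀ r h : ℝ, 2 ≤ r → 1 ≤ h →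
      (annCount Ω s r h : ℝ) ≤ C * r * (h⁻¹ + Real.log (2 + r) ^ (-(1 + ε / 2))) := by
  rw [show 1 + ε / 2 = (2 + ε) / 2 by ring]
  exact statement6_general Ω hconv hopen hbdd h0 γ γ' γ'' L hbp a (2 + ε) ha (by positivity) hlow
    hLlogL

end
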